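/- Let D = ρ/κ be a sum of fat staircases and λ = (λ_1) a single row with λ_1 − 1 at most the length of the last row of D. Then s_{S(λ^t, D; 1)} − s_{S(λ, D; 1)} ≥_s Σ_ν c^ρ_{κν} (s_{S(λ^t, α(ν); 1)} − s_{S(λ, α(ν); 1)}) ≥_s 0, where the sum runs over fat staircases ν with c^ρ_{κν} ≠ 0 and ≥_s denotes Schur-positivity of the difference. -/

import Mathlib

/-!
Littlewood–Richardson coefficients are counted by lattice tableaux, and a tableau is stored as its
Gelfand–Tsetlin pattern `Λ`, where `Λ v r` is the column in which the entries `< v` of row `r` end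
(`IsPat`, `schurOf_eq_card`, `lrCount_eq_card`).

*Littlewood–Richardson rule.* `schurOf_expand` writes a skew Schur function as the sum of the Schur
functions of the contents of its lattice tableaux. Bender–Knuth moves show that skew Schur
polynomials are symmetric (`spoly_symm`). Multiplying by the staircase alternant, Stembridge's
involution, which applies a Bender–Knuth move after the first violation of the lattice condition,
cancels all tableaux which are not lattice (`alt_spoly`).

*Columns and rows.* A lattice tableau of `S(1^m, E; 1)` is a lattice tableau of `E`, of content `ν`,
together with a vertical strip `μ/ν` of size `m` (`lrCount_col`); there is no further condition. A
lattice tableau of `S((m), E; 1)` is likewise determined by a lattice tableau of `E` and a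
horizontal strip `μ/ν` with at most one cell in row `0` (`lrCount_row_le`), but not every such pair
occurs in general. For a rotated fat staircase `E` every pair does occur, and moreover `E`
has a single lattice tableau, of content the staircase itself (`IsFat.unique`,
`IsFat.lrCount_col`, `IsFat.lrCount_row`).

*Conclusion.* All contents of lattice tableaux of `D` are fat staircases, so the lattice tableaux of
`D` can be grouped by content (`exists_stairs`). In the first difference the column terms then
cancel exactly, and the row terms contribute nonnegatively by the upper bound `lrCount_row_le`. In
the second difference every coefficient is a nonnegative combination of differences between the
indicators of the vertical and of the horizontal strip condition, and over a fat staircase the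
second condition implies the first (`Hrel.vrel`). The expansion for rotated staircases needs
`m - 1` to be at most the first row of each staircase that occurs; this follows from the
hypothesis, as the last row of `D` is no longer than the first part of the content of any lattice
tableau of `D` (`IsNE.lastRow_le`).
-/

open Finset

/-- A diagram is a finite set of cells `(row, column)`. -/
abbrev Diagram := Finset (ℕ × ℕ)

def ht (D : Diagram) : ℕ := D.sup (fun c => c.1 + 1)
def wd (D : Diagram) : ℕ := D.sup (fun c => c.2 + 1)

/-- A semistandard Young tableau of shape `D` (entries are 0-based: the paper's
value `v` corresponds to the entry `v - 1`). -/
structure SSYT (D : Diagram) where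
  entry : ℕ × ℕ → ℕ
  rowWeak : ∀ i j, (i, j) ∈ D → (i, j + 1) ∈ D → entry (i, j) ≤ entry (i, j + 1)
  colStrict : ∀ i j, (i, j) ∈ D → (i + 1, j) ∈ D → entry (i, j) < entry (i + 1, j)
  zero_outside : ∀ c, c ∉ D → entry c = 0

/-- The content of a tableau: `content T v` is the number of cells with entry `v`. -/
noncomputable def content {D : Diagram} (T : SSYT D) : ℕ →₀ ℕ := ∑ c ∈ D, Finsupp.single (T.entry c) 1

/-- `c'` is read before (or equal to) `c` in the reading word:
rows top to bottom, each row right to left. -/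
def ReadBefore (c' c : ℕ × ℕ) : Prop := c'.1 < c.1 ∨ (c'.1 = c.1 ∧ c.2 ≤ c'.2)

instance (c' c : ℕ × ℕ) : Decidable (ReadBefore c' c) := by
  unfold ReadBefore; infer_instance

/-- The reading word of `T` is lattice. -/
def IsLattice {D : Diagram} (T : SSYT D) : Prop :=
  ∀ c ∈ D, ∀ v : ℕ,
    (D.filter (fun c' => ReadBefore c' c ∧ T.entry c' = v + 1)).card ≤
    (D.filter (fun c' => ReadBefore c' c ∧ T.entry c' = v)).card

/-- The skew Schur function of a diagram, as a power series in `x_0, x_1, …`: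
the coefficient of the monomial with exponents `d` is the number of SSYT of
shape `D` and content `d`. -/
noncomputable def schurOf (D : Diagram) : MvPowerSeries ℕ ℤ :=
  fun d => (Nat.card {T : SSYT D // content T = d} : ℤ)

/-- Number of lattice SSYT of shape `D` and content `d`. -/
noncomputable def lrCount (D : Diagram) (d : ℕ →₀ ℕ) : ℕ :=
  Nat.card {T : SSYT D // IsLattice T ∧ content T = d}

/-- Littlewood–Richardson coefficient `c^lam_{mu, d}` (Littlewood–Richardson rule). -/
noncomputable def lrCoeff (lam mu : YoungDiagram) (d : ℕ →₀ ℕ) : ℕ :=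
  lrCount (lam.cells \ mu.cells) d

def diagramOfRows (L : List ℕ) : Diagram :=
  (Finset.range L.length).biUnion (fun i => (Finset.range (L.getD i 0)).image (fun j => (i, j)))

/-- The row lengths of the fat staircase `δ_α`. -/
def staircaseRows (α : List ℕ) : List ℕ :=
  ((List.range α.length).reverse.map (fun i => List.replicate (α.getD i 0) (i + 1))).flatten

/-- The fat staircase `δ_α = (n^{α_n}, …, 1^{α_1})` for `α = (α_1, …, α_n)`. -/
def fatStaircase (α : List ℕ) : Diagram := diagramOfRows (staircaseRows α)

/-- 180 degree rotation of a diagram. -/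
def rotD (D : Diagram) : Diagram :=
  D.image (fun c => (ht D - 1 - c.1, wd D - 1 - c.2))

/-- The sequence of row lengths of a diagram, as a finitely supported function. -/
noncomputable def rowContent (D : Diagram) : ℕ →₀ ℕ := ∑ c ∈ D, Finsupp.single c.1 1

/-- A content (partition) `d` is a fat staircase. -/
def IsFatStaircase (d : ℕ →₀ ℕ) : Prop :=
  ∃ α : List ℕ, (∀ a ∈ α, 0 < a) ∧ d = rowContent (fatStaircase α)

/-- Every Schur function appearing in the expansion of `s_D` is indexed by a fat staircase. -/
def IsSumOfFatStaircases (D : Diagram) : Prop :=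
  ∀ d, lrCount D d ≠ 0 → IsFatStaircase d

/-- Near-concatenation of depth `i`. -/
def nearConcat (i : ℕ) (D1 D2 : Diagram) : Diagram :=
  D1.image (fun c => (c.1 + (ht D2 - i), c.2)) ∪ D2.image (fun c => (c.1, c.2 + wd D1))

/-- Direct sum of diagrams. -/
def directSum (D1 D2 : Diagram) : Diagram := nearConcat 0 D1 D2

/-- A single column of `l` boxes. -/
def colD (l : ℕ) : Diagram := (Finset.range l).image (fun i => (i, 0))

/-- A single row of `m` boxes. -/
def rowD (m : ℕ) : Diagram := (Finset.range m).image (fun j => (0, j))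

def colLenAt (D : Diagram) (j : ℕ) : ℕ := (D.filter (fun c => c.2 = j)).card
noncomputable def leftCol (D : Diagram) : ℕ := sInf {j | ∃ i, (i, j) ∈ D}
noncomputable def blCol (D : Diagram) : ℕ := sInf {j | (ht D - 1, j) ∈ D}
noncomputable def topRow (D : Diagram) : ℕ := sInf {i | ∃ j, (i, j) ∈ D}
noncomputable def tlCol (D : Diagram) : ℕ := sInf {j | (topRow D, j) ∈ D}
def lastRowLen (D : Diagram) : ℕ := (D.filter (fun c => c.1 = ht D - 1)).card

/-- `S(F, E; k)`: the foundation `F` is placed immediately below `E`, with the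
first row of `F` beginning one box below and `k` boxes left of the bottom-left
box of `E`. -/
noncomputable def SDiagG (F E : Diagram) (k : ℕ) : Diagram :=
  E.image (fun c => (c.1, c.2 + tlCol F + k)) ∪
  F.image (fun c => (c.1 + ht E, c.2 + blCol E))

/-- `S(λ, μ, E; k)` with foundation the skew diagram `λ/μ`. -/
noncomputable def SDiag (lam mu : YoungDiagram) (E : Diagram) (k : ℕ) : Diagram :=
  SDiagG (lam.cells \ mu.cells) E k

/-- The set `R_{α,k}` (values as in the paper, i.e. 1-based). -/
def Rset (α : List ℕ) (k : ℕ) : Set ℕ :=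
  {v | ∃ j, 1 ≤ j ∧ j ≤ α.length ∧ v = 1 + (α.drop (α.length - j)).sum} ∪
  {v | v = 1 ∧ 0 < k}

def rectD (a b : ℕ) : Diagram := Finset.range a ×ˢ Finset.range b

/-- The complement `D^c` of `D` in the `a × b` rectangle: the 180 degree rotation
of the set-theoretic complement of `D` in the rectangle. -/
def complD (a b : ℕ) (D : Diagram) : Diagram :=
  (rectD a b \ D).image (fun c => (a - 1 - c.1, b - 1 - c.2))

def IsSkewDiagram (D : Diagram) : Prop :=
  ∃ lam mu : YoungDiagram, mu ≤ lam ∧ D = lam.cells \ mu.cells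

def diagramOfF (d : ℕ →₀ ℕ) : Diagram :=
  d.support.biUnion (fun i => (Finset.range (d i)).image (fun j => (i, j)))

/-- A symmetric function is Schur-positive when it is a nonnegative integer
combination of Schur functions of partitions. -/
def SchurPositive (f : MvPowerSeries ℕ ℤ) : Prop :=
  ∃ (S : Finset (ℕ →₀ ℕ)) (a : (ℕ →₀ ℕ) → ℕ),
    (∀ d ∈ S, ∀ i, d (i + 1) ≤ d i) ∧
    f = ∑ d ∈ S, (a d : ℤ) • schurOf (diagramOfF d)

def AdjCell (c c' : ℕ × ℕ) : Prop :=
  (c.1 = c'.1 ∧ (c.2 + 1 = c'.2 ∨ c'.2 + 1 = c.2)) ∨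
  (c.2 = c'.2 ∧ (c.1 + 1 = c'.1 ∨ c'.1 + 1 = c.1))

def ConnectedDiagram (D : Diagram) : Prop :=
  ∀ c ∈ D, ∀ c' ∈ D, Relation.ReflTransGen (fun a b => a ∈ D ∧ b ∈ D ∧ AdjCell a b) c c'

/-! ### Semistandard tableaux as patterns -/

/-- The skew shape whose row `r < H` occupies the columns `κ r ≤ c < ρ r`. Unlike for Young
diagrams, `κ` and `ρ` are plain functions; `IsShape` holds the conditions making this a genuine skew
shape. -/
def shapeCells (κ ρ : ℕ → ℕ) (H : ℕ) : Diagram :=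
  (range H).biUnion fun r => (Ico (κ r) (ρ r)).image fun c => (r, c)

/-- `κ` and `ρ` are weakly decreasing with `κ ≤ ρ`, and `ρ` vanishes from row `H` on, so that
`shapeCells κ ρ H` is the skew diagram `ρ/κ`. -/
structure IsShape (κ ρ : ℕ → ℕ) (H : ℕ) : Prop where
  antiInner : ∀ r, κ (r + 1) ≤ κ r
  antiOuter : ∀ r, ρ (r + 1) ≤ ρ r
  le : ∀ r, κ r ≤ ρ r
  zero : ∀ r, H ≤ r → ρ r = 0

/-- Gelfand–Tsetlin pattern of a semistandard tableau of shape `ρ/κ`: `Λ v r` is the first column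
`≥ κ r` of row `r` beyond the cells with entry `< v`. Thus `Λ 0 = κ`, `Λ v = ρ` for
large `v`, and `inter` says that the entries `v` form a horizontal strip. Rows outside the
shape carry the value `0`. -/
structure IsPat (κ ρ : ℕ → ℕ) (Λ : ℕ → ℕ → ℕ) : Prop where
  bot : ∀ r, Λ 0 r = κ r
  mono : ∀ v r, Λ v r ≤ Λ (v + 1) r
  inter : ∀ v r, Λ (v + 1) (r + 1) ≤ Λ v r
  top : ∃ N, ∀ v, N ≤ v → ∀ r, Λ v r = ρ r

/-- The number of entries equal to `v` in the rows `< R` of the tableau with pattern `Λ`. -/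
def cnt (Λ : ℕ → ℕ → ℕ) (v R : ℕ) : ℕ := ∑ i ∈ range R, (Λ (v + 1) i - Λ v i)

/-- The lattice condition row by row: up to row `R` there are at most as many entries `v + 1` as
there are entries `v` strictly above row `R`. -/
def IsLat (Λ : ℕ → ℕ → ℕ) : Prop := ∀ v R, cnt Λ (v + 1) (R + 1) ≤ cnt Λ v R

theorem mem_shapeCells {κ ρ : ℕ → ℕ} {H : ℕ} (i j : ℕ) :
    (i, j) ∈ shapeCells κ ρ H ↔ i < H ∧ κ i ≤ j ∧ j < ρ i := by
  simp [shapeCells]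

theorem IsShape.mem {κ ρ : ℕ → ℕ} {H : ℕ} (h : IsShape κ ρ H) (i j : ℕ) :
    (i, j) ∈ shapeCells κ ρ H ↔ κ i ≤ j ∧ j < ρ i := by
  rw [mem_shapeCells]
  have := h.zero i
  constructor
  · exact fun h => h.2
  · intro h2
    refine ⟨?_, h2⟩
    by_contra hc
    have := this (by omega)
    omega

theorem IsPat.mono_le {κ ρ : ℕ → ℕ} {Λ : ℕ → ℕ → ℕ} (h : IsPat κ ρ Λ) {u v : ℕ} (huv : u ≤ v)
    (r : ℕ) : Λ u r ≤ Λ v r :=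
  monotone_nat_of_le_succ (f := fun v => Λ v r) (fun v => h.mono v r) huv

theorem IsPat.le_top {κ ρ : ℕ → ℕ} {Λ : ℕ → ℕ → ℕ} (h : IsPat κ ρ Λ) (v r : ℕ) :
    Λ v r ≤ ρ r := by
  obtain ⟨N, hN⟩ := h.top
  rw [← hN (max N v) (le_max_left _ _) r]
  exact h.mono_le (le_max_right _ _) r

theorem IsPat.bot_le {κ ρ : ℕ → ℕ} {Λ : ℕ → ℕ → ℕ} (h : IsPat κ ρ Λ) (v r : ℕ) :
    κ r ≤ Λ v r := by
  rw [← h.bot r]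
  exact h.mono_le (Nat.zero_le v) r

/-- The pattern of a tableau. -/
def patOf {κ ρ : ℕ → ℕ} {H : ℕ} (T : SSYT (shapeCells κ ρ H)) (v r : ℕ) : ℕ :=
  κ r + #{j ∈ Ico (κ r) (ρ r) | T.entry (r, j) < v}

section Bij
variable {κ ρ : ℕ → ℕ} {H : ℕ}

theorem row_mono (hs : IsShape κ ρ H) (T : SSYT (shapeCells κ ρ H)) {r j j' : ℕ}
    (h1 : κ r ≤ j) (h2 : j ≤ j') (h3 : j' < ρ r) : T.entry (r, j) ≤ T.entry (r, j') := by
  induction j', h2 using Nat.le_induction with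
  | base => exact le_rfl
  | succ k hk ih =>
    refine (ih (by omega)).trans (T.rowWeak r k ?_ ?_)
    · rw [hs.mem]; omega
    · rw [hs.mem]; omega

/-- Rows are weakly increasing, so the cells with entry `< v` form an initial segment of the row,
ending at `patOf T v r`. -/
theorem entry_lt_iff (hs : IsShape κ ρ H) (T : SSYT (shapeCells κ ρ H)) {r j v : ℕ}
    (h1 : κ r ≤ j) (h3 : j < ρ r) : T.entry (r, j) < v ↔ j < patOf T v r := by
  unfold patOf
  constructor
  · intro h
    have : Ico (κ r) (j + 1) ⊆ {j ∈ Ico (κ r) (ρ r) | T.entry (r, j) < v} := by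
      intro k hk
      simp only [mem_Ico, mem_filter] at hk ⊢
      exact ⟨by omega, (row_mono hs T hk.1 (by omega) h3).trans_lt h⟩
    have := card_le_card this
    simp only [Nat.card_Ico] at this
    omega
  · intro h
    by_contra hc
    have : {j ∈ Ico (κ r) (ρ r) | T.entry (r, j) < v} ⊆ Ico (κ r) j := by
      intro k hk
      simp only [mem_Ico, mem_filter] at hk ⊢
      refine ⟨hk.1.1, ?_⟩
      by_contra hkj
      have := row_mono hs T h1 (not_lt.1 hkj) hk.1.2
      omega
    have := card_le_card this
    simp only [Nat.card_Ico] at this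
    omega

theorem patOf_le (hs : IsShape κ ρ H) (T : SSYT (shapeCells κ ρ H)) (v r : ℕ) :
    κ r ≤ patOf T v r ∧ patOf T v r ≤ ρ r := by
  unfold patOf
  have := card_filter_le (Ico (κ r) (ρ r)) (fun j => T.entry (r, j) < v)
  have := hs.le r
  simp only [Nat.card_Ico] at *
  omega

theorem isPat_patOf (hs : IsShape κ ρ H) (T : SSYT (shapeCells κ ρ H)) :
    IsPat κ ρ (patOf T) where
  bot r := by simp [patOf]
  mono v r := by
    unfold patOf
    gcongr
    omega
  inter v r := by
    by_contra hc
    have h1 := patOf_le hs T v r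
    have h2 := patOf_le hs T (v + 1) (r + 1)
    have h3 := hs.antiInner r
    have h4 := hs.antiOuter r
    -- the first cell of row `r` violating the inequality
    have e1 := (entry_lt_iff hs T (r := r + 1) (j := patOf T v r) (v := v + 1) (by omega)
      (by omega)).2 (by omega)
    have e2 := (entry_lt_iff hs T (r := r) (j := patOf T v r) (v := v) (by omega)
      (by omega)).not.2 (by omega)
    have e3 := T.colStrict r (patOf T v r) (by rw [hs.mem]; omega) (by rw [hs.mem]; omega)
    omega
  top := by
    refine ⟨(shapeCells κ ρ H).sup T.entry + 1, fun v hv r => ?_⟩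
    have : {j ∈ Ico (κ r) (ρ r) | T.entry (r, j) < v} = Ico (κ r) (ρ r) := by
      apply filter_true_of_mem
      intro j hj
      rw [mem_Ico] at hj
      have := le_sup (f := T.entry) ((hs.mem r j).2 hj)
      omega
    have h2 := hs.le r
    simp only [patOf, this, Nat.card_Ico]
    omega

theorem patOf_injective (hs : IsShape κ ρ H) :
    Function.Injective (patOf : SSYT (shapeCells κ ρ H) → _) := by
  intro T T' h
  have : T.entry = T'.entry := by
    funext ⟨i, j⟩
    by_cases hm : (i, j) ∈ shapeCells κ ρ H
    · have hm' := (hs.mem i j).1 hm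
      have key : ∀ v, T.entry (i, j) < v ↔ T'.entry (i, j) < v := by
        intro v
        rw [entry_lt_iff hs T hm'.1 hm'.2, entry_lt_iff hs T' hm'.1 hm'.2, h]
      have a := (key (T.entry (i, j))).not
      have b := (key (T'.entry (i, j))).not
      simp only [lt_irrefl, not_false_eq_true, true_iff, iff_true, not_lt] at a b
      omega
    · rw [T.zero_outside _ hm, T'.zero_outside _ hm]
  cases T; cases T'; simp_all

theorem patOf_surjective (hs : IsShape κ ρ H) {Λ : ℕ → ℕ → ℕ} (hΛ : IsPat κ ρ Λ) :
    ∃ T : SSYT (shapeCells κ ρ H), patOf T = Λ := by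
  classical
  let e : ℕ × ℕ → ℕ := fun c =>
    if c ∈ shapeCells κ ρ H then sInf {v | c.2 < Λ (v + 1) c.1} else 0
  have he : ∀ i j v, (i, j) ∈ shapeCells κ ρ H → (e (i, j) < v ↔ j < Λ v i) := by
    intro i j v hm
    have hm' := (hs.mem i j).1 hm
    have hne : {v | j < Λ (v + 1) i}.Nonempty := by
      obtain ⟨N, hN⟩ := hΛ.top
      refine ⟨N, ?_⟩
      simp only [Set.mem_ofPred_eq]
      rw [hN _ (by omega)]
      exact hm'.2
    simp only [e, hm, if_true]
    have h1 : j < Λ (sInf {v | j < Λ (v + 1) i} + 1) i := Nat.sInf_mem hne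
    constructor
    · intro h
      exact h1.trans_le (hΛ.mono_le (by omega) i)
    · intro h
      cases v with
      | zero => rw [hΛ.bot] at h; omega
      | succ v => exact Nat.lt_succ_of_le (Nat.sInf_le h)
  refine ⟨⟨e, ?_, ?_, ?_⟩, ?_⟩
  · intro i j h1 h2
    by_contra hc
    have a := (he i (j + 1) (e (i, j)) h2).1 (by omega)
    have b := (he i j (e (i, j)) h1).not.1 (by omega)
    omega
  · intro i j h1 h2
    have a := (he (i + 1) j (e (i + 1, j) + 1) h2).1 (by omega)
    exact (he i j (e (i + 1, j)) h1).2 (a.trans_le (hΛ.inter _ _))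
  · intro c hc
    simp [e, hc]
  · funext v r
    have h1 := hΛ.bot_le v r
    have h2 := hΛ.le_top v r
    have : {j ∈ Ico (κ r) (ρ r) | e (r, j) < v} = Ico (κ r) (Λ v r) := by
      ext j
      simp only [mem_filter, mem_Ico]
      constructor
      · rintro ⟨h3, h4⟩
        exact ⟨h3.1, (he r j v ((hs.mem r j).2 h3)).1 h4⟩
      · rintro ⟨h3, h4⟩
        have h5 : κ r ≤ j ∧ j < ρ r := ⟨h3, by omega⟩
        exact ⟨h5, (he r j v ((hs.mem r j).2 h5)).2 h4⟩
    simp only [patOf, this, Nat.card_Ico]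
    omega

theorem card_filter_shapeCells (P : ℕ × ℕ → Prop) [DecidablePred P] :
    #((shapeCells κ ρ H).filter P) =
      ∑ r ∈ range H, #{j ∈ Ico (κ r) (ρ r) | P (r, j)} := by
  rw [shapeCells, filter_biUnion, card_biUnion]
  · apply sum_congr rfl
    intro r _
    rw [filter_image, card_image_of_injective]
    intro a b h
    simpa using h
  · intro a _ b _ hab
    rw [Function.onFun, disjoint_left]
    intro c hc hc'
    simp only [mem_filter, mem_image] at hc hc'
    obtain ⟨⟨x, _, rfl⟩, _⟩ := hc
    obtain ⟨⟨y, _, h⟩, _⟩ := hc'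
    simp only [Prod.mk.injEq] at h
    exact hab h.1.symm

theorem entry_eq_iff (hs : IsShape κ ρ H) (T : SSYT (shapeCells κ ρ H)) {r j v : ℕ}
    (h1 : κ r ≤ j) (h3 : j < ρ r) :
    T.entry (r, j) = v ↔ patOf T v r ≤ j ∧ j < patOf T (v + 1) r := by
  rw [← entry_lt_iff hs T h1 h3, ← not_lt, ← entry_lt_iff hs T h1 h3]
  omega

theorem row_count (hs : IsShape κ ρ H) (T : SSYT (shapeCells κ ρ H)) (r v : ℕ) :
    #{j ∈ Ico (κ r) (ρ r) | T.entry (r, j) = v} = patOf T (v + 1) r - patOf T v r := by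
  have : {j ∈ Ico (κ r) (ρ r) | T.entry (r, j) = v} = Ico (patOf T v r) (patOf T (v + 1) r) := by
    ext j
    have h1 := patOf_le hs T v r
    have h2 := patOf_le hs T (v + 1) r
    simp only [mem_filter, mem_Ico]
    constructor
    · rintro ⟨h3, h4⟩
      exact (entry_eq_iff hs T h3.1 h3.2).1 h4
    · intro h
      have h5 : κ r ≤ j ∧ j < ρ r := by omega
      exact ⟨h5, (entry_eq_iff hs T h5.1 h5.2).2 h⟩
  rw [this, Nat.card_Ico]

theorem content_eq_cnt (hs : IsShape κ ρ H) (T : SSYT (shapeCells κ ρ H)) (v : ℕ) :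
    content T v = cnt (patOf T) v H := by
  have : content T v = #((shapeCells κ ρ H).filter fun c => T.entry c = v) := by
    simp [content, Finsupp.finsetSum_apply, Finsupp.single_apply]
  rw [this, card_filter_shapeCells, cnt]
  exact sum_congr rfl fun r _ => row_count hs T r v

theorem rows_count (hs : IsShape κ ρ H) (T : SSYT (shapeCells κ ρ H)) {r : ℕ} (hr : r < H)
    (j v : ℕ) :
    #((shapeCells κ ρ H).filter fun c' => ReadBefore c' (r, j) ∧ T.entry c' = v) =
      cnt (patOf T) v r + #{j' ∈ Ico (κ r) (ρ r) | j ≤ j' ∧ T.entry (r, j') = v} := by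
  rw [card_filter_shapeCells,
    ← sum_subset (s₁ := range (r + 1)) (by intro x; simp only [mem_range]; omega), sum_range_succ]
  · congr 1
    · apply sum_congr rfl
      intro i hi
      rw [mem_range] at hi
      rw [← row_count hs T i v]
      congr 1
      apply filter_congr
      intro j' _
      simp [ReadBefore, hi]
    · congr 1
      apply filter_congr
      intro j' _
      simp [ReadBefore]
  · intro i _ hi
    rw [mem_range] at hi
    rw [card_eq_zero, filter_eq_empty_iff]
    intro j' _
    simp only [ReadBefore]
    omega

theorem cnt_mono (Λ : ℕ → ℕ → ℕ) (v : ℕ) {R R' : ℕ} (h : R ≤ R') : cnt Λ v R ≤ cnt Λ v R' :=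
  sum_le_sum_of_subset (range_mono h)

theorem cnt_succ (Λ : ℕ → ℕ → ℕ) (v R : ℕ) :
    cnt Λ v (R + 1) = cnt Λ v R + (Λ (v + 1) R - Λ v R) := sum_range_succ _ _

/-- The cell-by-cell lattice condition agrees with the row-by-row one: in a given row all entries
`v + 1` are read before the entries `v`, so the critical moment is just after the leftmost
`v + 1`. -/
theorem isLattice_iff (hs : IsShape κ ρ H) (T : SSYT (shapeCells κ ρ H)) :
    IsLattice T ↔ IsLat (patOf T) := by
  constructor
  · intro h v
    -- a row containing the value `v + 1` is controlled by its leftmost such cell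
    have key : ∀ R, patOf T (v + 1 + 1) R ≠ patOf T (v + 1) R →
        cnt (patOf T) (v + 1) (R + 1) ≤ cnt (patOf T) v R := by
      intro R hx
      have h0 := (isPat_patOf hs T).mono (v + 1) R
      have h1 := patOf_le hs T (v + 1) R
      have h2 := patOf_le hs T (v + 1 + 1) R
      have hm : (R, patOf T (v + 1) R) ∈ shapeCells κ ρ H := by rw [hs.mem]; omega
      have hH := ((mem_shapeCells _ _).1 hm).1
      have := h _ hm v
      rw [rows_count hs T hH, rows_count hs T hH] at this
      have e1 : #{j' ∈ Ico (κ R) (ρ R) | patOf T (v + 1) R ≤ j' ∧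
          T.entry (R, j') = v} = 0 := by
        rw [card_eq_zero, filter_eq_empty_iff]
        intro j' hj'
        rw [mem_Ico] at hj'
        rw [entry_eq_iff hs T hj'.1 hj'.2]
        omega
      have e2 : #{j' ∈ Ico (κ R) (ρ R) | patOf T (v + 1) R ≤ j' ∧
          T.entry (R, j') = v + 1} = patOf T (v + 1 + 1) R - patOf T (v + 1) R := by
        rw [← row_count hs T R (v + 1)]
        congr 1
        apply filter_congr
        intro j' hj'
        rw [mem_Ico] at hj'
        rw [entry_eq_iff hs T hj'.1 hj'.2]
        omega
      rw [cnt_succ]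
      omega
    intro R
    by_cases hx : patOf T (v + 1 + 1) R = patOf T (v + 1) R
    · induction R with
      | zero => simp [cnt, hx]
      | succ R ih =>
        rw [cnt_succ, hx]
        have h1 := cnt_mono (patOf T) v (Nat.le_add_right R 1)
        by_cases hx' : patOf T (v + 1 + 1) R = patOf T (v + 1) R
        · have := ih hx'
          omega
        · have := key R hx'
          omega
    · exact key R hx
  · rintro h ⟨r, j⟩ hm v
    have hH := ((mem_shapeCells _ _).1 hm).1
    rw [rows_count hs T hH, rows_count hs T hH]
    have h1 := h v r
    rw [cnt_succ, ← row_count hs T r (v + 1)] at h1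
    have h2 : #{j' ∈ Ico (κ r) (ρ r) | j ≤ j' ∧ T.entry (r, j') = v + 1} ≤
        #{j' ∈ Ico (κ r) (ρ r) | T.entry (r, j') = v + 1} := by
      apply card_le_card
      intro x
      simp only [mem_filter]
      tauto
    omega

theorem schurOf_eq_card (hs : IsShape κ ρ H) (d : ℕ →₀ ℕ) :
    schurOf (shapeCells κ ρ H) d =
      (Nat.card {Λ : ℕ → ℕ → ℕ // IsPat κ ρ Λ ∧ ∀ v, cnt Λ v H = d v} : ℤ) := by
  unfold schurOf
  congr 1
  refine Nat.card_congr (Equiv.ofBijective (fun T => ⟨patOf T.1, isPat_patOf hs T.1, fun v => ?_⟩)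
    ⟨?_, ?_⟩)
  · rw [← content_eq_cnt hs, T.2]
  · intro T T' h
    exact Subtype.ext (patOf_injective hs (congrArg Subtype.val h))
  · rintro ⟨Λ, h1, h2⟩
    obtain ⟨T, rfl⟩ := patOf_surjective hs h1
    exact ⟨⟨T, Finsupp.ext fun v => by rw [content_eq_cnt hs, h2]⟩, rfl⟩

theorem lrCount_eq_card (hs : IsShape κ ρ H) (d : ℕ →₀ ℕ) :
    lrCount (shapeCells κ ρ H) d =
      Nat.card {Λ : ℕ → ℕ → ℕ // IsPat κ ρ Λ ∧ IsLat Λ ∧ ∀ v, cnt Λ v H = d v} := by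
  unfold lrCount
  refine Nat.card_congr (Equiv.ofBijective
    (fun T => ⟨patOf T.1, isPat_patOf hs T.1, (isLattice_iff hs T.1).1 T.2.1, fun v => ?_⟩)
    ⟨?_, ?_⟩)
  · rw [← content_eq_cnt hs, T.2.2]
  · intro T T' h
    exact Subtype.ext (patOf_injective hs (congrArg Subtype.val h))
  · rintro ⟨Λ, h1, h2, h3⟩
    obtain ⟨T, rfl⟩ := patOf_surjective hs h1
    exact ⟨⟨T, (isLattice_iff hs T).2 h2, Finsupp.ext fun v => by rw [content_eq_cnt hs, h3]⟩, rfl⟩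

end Bij

/-! ### Bender–Knuth moves -/

/-- Bender–Knuth move on the partition at level `v + 1` (the boundary between the entries `v` and
`v + 1`), restricted to the rows `≥ R`. In each such row the value `Λ (v + 1) r` is reflected inside
the interval allowed by its neighbours at levels `v` and `v + 2`; in row `R` the upper end of the
interval is replaced by `j`, so that only the cells in columns `< j` move. -/
def tog (v R j : ℕ) (Λ : ℕ → ℕ → ℕ) (u r : ℕ) : ℕ :=
  if u = v + 1 ∧ R ≤ r then
    (if r = R then j else min (Λ (v + 2) r) (Λ v (r - 1))) + max (Λ v r) (Λ (v + 2) (r + 1))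
      - Λ (v + 1) r
  else Λ u r

/-- The bound `j` in row `R` is compatible with the pattern, so that `tog v R j` is an involution
on such patterns. -/
structure CanTog (κ ρ : ℕ → ℕ) (v R j : ℕ) (Λ : ℕ → ℕ → ℕ) : Prop where
  pat : IsPat κ ρ Λ
  ge : Λ (v + 1) R ≤ j
  le : j ≤ Λ (v + 2) R
  le' : ∀ r, R = r + 1 → j ≤ Λ v r

section Tog
variable {κ ρ : ℕ → ℕ} {H : ℕ} {v R j : ℕ} {Λ : ℕ → ℕ → ℕ}

theorem tog_of_ne {u : ℕ} (h : u ≠ v + 1) (r : ℕ) : tog v R j Λ u r = Λ u r := by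
  simp [tog, h]

theorem tog_of_lt {r : ℕ} (h : r < R) (u : ℕ) : tog v R j Λ u r = Λ u r := by
  simp [tog, h]

theorem tog_self : tog v R j Λ (v + 1) R =
    j + max (Λ v R) (Λ (v + 2) (R + 1)) - Λ (v + 1) R := by
  simp [tog]

theorem tog_succ {r : ℕ} (h : R ≤ r) : tog v R j Λ (v + 1) (r + 1) =
    min (Λ (v + 2) (r + 1)) (Λ v r) + max (Λ v (r + 1)) (Λ (v + 2) (r + 2)) -
      Λ (v + 1) (r + 1) := by
  have h1 : R ≤ r + 1 := by omega
  have h2 : r + 1 ≠ R := by omega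
  simp [tog, h1, h2]

theorem CanTog.isPat (h : CanTog κ ρ v R j Λ) : IsPat κ ρ (tog v R j Λ) where
  bot r := by rw [tog_of_ne (by omega), h.pat.bot]
  mono u r := by
    have h1 := h.pat.mono
    have h2 := h.pat.inter
    by_cases hr : r < R
    · rw [tog_of_lt hr, tog_of_lt hr]; exact h1 u r
    obtain rfl | ⟨s, rfl, hs⟩ : r = R ∨ ∃ s, r = s + 1 ∧ R ≤ s := by
      rcases Nat.lt_or_ge R r with h3 | h3
      · exact Or.inr ⟨r - 1, by omega, by omega⟩
      · left; omega
    · by_cases hu : u = v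
      · subst hu
        rw [tog_self, tog_of_ne (by omega)]
        have := h.ge; omega
      · by_cases hu' : u = v + 1
        · subst hu'
          rw [tog_self, tog_of_ne (by omega)]
          have := h.ge; have := h.le
          have := h1 v r; have := h2 (v + 1) r
          simp only [Nat.add_assoc, Nat.reduceAdd] at *
          omega
        · rw [tog_of_ne (by omega), tog_of_ne (by omega)]; exact h1 u r
    · have b1 := h1 v (s + 1)
      have b2 := h1 (v + 1) (s + 1)
      have b3 := h2 v s
      have b4 := h2 (v + 1) (s + 1)
      simp only [Nat.add_assoc, Nat.reduceAdd] at b1 b2 b3 b4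
      by_cases hu : u = v
      · subst hu
        rw [tog_succ hs, tog_of_ne (by omega)]
        omega
      · by_cases hu' : u = v + 1
        · subst hu'
          rw [tog_succ hs, tog_of_ne (by omega)]
          change _ ≤ Λ (v + 2) (s + 1)
          omega
        · rw [tog_of_ne (by omega), tog_of_ne (by omega)]; exact h1 u _
  inter u r := by
    have h1 := h.pat.mono
    have h2 := h.pat.inter
    by_cases hu : u = v
    · subst hu
      rw [tog_of_ne (u := u) (by omega)]
      by_cases hr : r + 1 < R
      · rw [tog_of_lt hr]; exact h2 u r
      by_cases hr' : r + 1 = R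
      · subst hr'
        rw [tog_self]
        have := h.le' r rfl
        have := h.ge
        have := h1 u (r + 1); have := h2 (u + 1) (r + 1)
        simp only [Nat.add_assoc, Nat.reduceAdd] at *
        omega
      · rw [tog_succ (by omega)]
        have := h2 u r; have := h1 u (r + 1); have := h2 (u + 1) (r + 1)
        simp only [Nat.add_assoc, Nat.reduceAdd] at *
        omega
    · rw [tog_of_ne (u := u + 1) (by omega)]
      by_cases hu' : u = v + 1
      · subst hu'
        by_cases hr : r < R
        · rw [tog_of_lt hr]; exact h2 _ r
        obtain rfl | ⟨s, rfl, hs⟩ : r = R ∨ ∃ s, r = s + 1 ∧ R ≤ s := by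
          rcases Nat.lt_or_ge R r with h3 | h3
          · exact Or.inr ⟨r - 1, by omega, by omega⟩
          · left; omega
        · rw [tog_self]
          have := h.ge
          simp only [Nat.add_assoc, Nat.reduceAdd] at *
          omega
        · rw [tog_succ hs]
          have b1 := h1 v (s + 1)
          have b2 := h1 (v + 1) (s + 1)
          have b3 := h2 v s
          simp only [Nat.add_assoc, Nat.reduceAdd] at *
          omega
      · rw [tog_of_ne hu']; exact h2 u r
  top := by
    obtain ⟨N, hN⟩ := h.pat.top
    refine ⟨max N (v + 2), fun u hu r => ?_⟩
    rw [tog_of_ne (by omega)]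
    exact hN u (by omega) r

theorem CanTog.tog_le (h : CanTog κ ρ v R j Λ) : tog v R j Λ (v + 1) R ≤ j := by
  rw [tog_self]
  have := h.ge; have := h.pat.mono v R; have := h.pat.inter (v + 1) R
  simp only [Nat.add_assoc, Nat.reduceAdd] at *
  omega

theorem CanTog.canTog (h : CanTog κ ρ v R j Λ) : CanTog κ ρ v R j (tog v R j Λ) where
  pat := h.isPat
  ge := h.tog_le
  le := by rw [tog_of_ne (by omega)]; exact h.le
  le' := fun r hr => by rw [tog_of_ne (by omega)]; exact h.le' r hr

theorem CanTog.tog_tog (h : CanTog κ ρ v R j Λ) : tog v R j (tog v R j Λ) = Λ := by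
  have h1 := h.pat.mono
  have h2 := h.pat.inter
  funext u r
  by_cases hu : u = v + 1
  · subst hu
    by_cases hr : r < R
    · rw [tog_of_lt hr, tog_of_lt hr]
    obtain rfl | ⟨s, rfl, hs⟩ : r = R ∨ ∃ s, r = s + 1 ∧ R ≤ s := by
      rcases Nat.lt_or_ge R r with h3 | h3
      · exact Or.inr ⟨r - 1, by omega, by omega⟩
      · left; omega
    · rw [tog_self, tog_self, tog_of_ne (by omega), tog_of_ne (by omega)]
      have := h.ge
      omega
    · rw [tog_succ hs, tog_succ hs, tog_of_ne (by omega), tog_of_ne (by omega),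
        tog_of_ne (by omega), tog_of_ne (by omega)]
      have b2 := h1 (v + 1) (s + 1)
      have b3 := h2 v s
      simp only [Nat.add_assoc, Nat.reduceAdd] at *
      omega
  · rw [tog_of_ne hu, tog_of_ne hu]

theorem sum_cnt (h : IsPat κ ρ Λ) (v R : ℕ) :
    cnt Λ v R + ∑ i ∈ range R, Λ v i = ∑ i ∈ range R, Λ (v + 1) i := by
  rw [cnt, ← sum_add_distrib]
  apply sum_congr rfl
  intro i _
  have := h.mono v i
  omega

theorem CanTog.sum_aux (h : CanTog κ ρ v R j Λ) (n : ℕ) :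
    ∑ i ∈ range (R + n + 1), (tog v R j Λ (v + 1) i + Λ (v + 1) i) +
      (∑ i ∈ range R, (Λ v i + Λ (v + 2) i) + Λ (v + 2) R + Λ v (R + n)) =
    j + ∑ i ∈ range (R + n + 1), (Λ v i + Λ (v + 2) i) +
      (∑ i ∈ range R, 2 * Λ (v + 1) i + max (Λ v (R + n)) (Λ (v + 2) (R + n + 1))) := by
  have h1 := h.pat.mono
  have h2 := h.pat.inter
  induction n with
  | zero =>
    rw [sum_range_succ, sum_range_succ]
    have e : ∑ i ∈ range R, (tog v R j Λ (v + 1) i + Λ (v + 1) i) =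
        ∑ i ∈ range R, 2 * Λ (v + 1) i := by
      apply sum_congr rfl
      intro i hi
      rw [tog_of_lt (mem_range.1 hi)]
      ring
    simp only [Nat.add_zero]
    rw [e, tog_self]
    have := h.ge
    have := h1 v R
    have := h2 (v + 1) R
    simp only [Nat.add_assoc, Nat.reduceAdd] at *
    omega
  | succ n ih =>
    rw [sum_range_succ _ (R + (n + 1)), sum_range_succ (fun i => Λ v i + Λ (v + 2) i) (R + (n + 1))]
    have e : tog v R j Λ (v + 1) (R + (n + 1)) = _ := tog_succ (r := R + n) (by omega)
    rw [e]
    have b2 := h1 (v + 1) (R + n + 1)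
    have b3 := h2 v (R + n)
    simp only [Nat.add_assoc, Nat.reduceAdd] at *
    omega

/-- The sum of the toggled level over all rows: the lower end of the reflection interval in row `r`
and the upper end in row `r + 1` add up to `Λ v r + Λ (v + 2) (r + 1)`, so the sum of all ends
telescopes. -/
theorem CanTog.sum_tog (hs : IsShape κ ρ H) (h : CanTog κ ρ v R j Λ) (hR : R < H) :
    ∑ i ∈ range H, tog v R j Λ (v + 1) i + ∑ i ∈ range H, Λ (v + 1) i +
      (∑ i ∈ range R, Λ v i + ∑ i ∈ range R, Λ (v + 2) i + Λ (v + 2) R) =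
    j + (∑ i ∈ range H, Λ v i + ∑ i ∈ range H, Λ (v + 2) i) + 2 * ∑ i ∈ range R, Λ (v + 1) i := by
  obtain ⟨n, rfl⟩ : ∃ n, H = R + n + 1 := ⟨H - R - 1, by omega⟩
  have := h.sum_aux n
  have h0 : Λ (v + 2) (R + n + 1) = 0 := by
    have := h.pat.le_top (v + 2) (R + n + 1)
    rw [hs.zero _ le_rfl] at this
    omega
  rw [h0] at this
  simp only [sum_add_distrib, ← mul_sum] at this
  omega

theorem cnt_congr {Λ Λ' : ℕ → ℕ → ℕ} {u R : ℕ} (h : ∀ i < R, Λ (u + 1) i = Λ' (u + 1) i)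
    (h' : ∀ i < R, Λ u i = Λ' u i) : cnt Λ u R = cnt Λ' u R := by
  apply sum_congr rfl
  intro i hi
  rw [mem_range] at hi
  rw [h i hi, h' i hi]

theorem CanTog.cnt_other (u : ℕ) (h1 : u ≠ v) (h2 : u ≠ v + 1) :
    cnt (tog v R j Λ) u H = cnt Λ u H :=
  cnt_congr (fun i _ => tog_of_ne (by omega) i) (fun i _ => tog_of_ne (by omega) i)

theorem IsPat.eq_zero (hs : IsShape κ ρ H) (h : IsPat κ ρ Λ) (u : ℕ) {r : ℕ} (hr : H ≤ r) :
    Λ u r = 0 := by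
  have := h.le_top u r
  rw [hs.zero _ hr] at this
  omega

theorem canTog_full (h : IsPat κ ρ Λ) (v : ℕ) : CanTog κ ρ v 0 (Λ (v + 2) 0) Λ where
  pat := h
  ge := h.mono _ _
  le := le_rfl
  le' := by simp

/-- The unrestricted Bender–Knuth involution exchanges the numbers of entries `v` and `v + 1`. -/
theorem cnt_full (hs : IsShape κ ρ H) (h : IsPat κ ρ Λ) (v : ℕ) :
    cnt (tog v 0 (Λ (v + 2) 0) Λ) v H = cnt Λ (v + 1) H ∧
    cnt (tog v 0 (Λ (v + 2) 0) Λ) (v + 1) H = cnt Λ v H := by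
  rcases Nat.eq_zero_or_pos H with rfl | hH
  · simp [cnt]
  have hc := canTog_full h v
  have h1 := hc.sum_tog hs hH
  have h2 := sum_cnt hc.isPat v H
  have h3 := sum_cnt hc.isPat (v + 1) H
  have h4 := sum_cnt h v H
  have h5 := sum_cnt h (v + 1) H
  have e1 : ∑ i ∈ range H, tog v 0 (Λ (v + 2) 0) Λ v i = ∑ i ∈ range H, Λ v i :=
    sum_congr rfl fun i _ => tog_of_ne (by omega) i
  have e2 : ∑ i ∈ range H, tog v 0 (Λ (v + 2) 0) Λ (v + 1 + 1) i =
      ∑ i ∈ range H, Λ (v + 2) i :=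
    sum_congr rfl fun i _ => tog_of_ne (by omega) i
  rw [e1] at h2
  rw [e2] at h3
  simp only [range_zero, sum_empty, Nat.add_assoc, Nat.reduceAdd] at *
  omega

/-! ### Violations of the lattice condition -/

/-- The first violation of the lattice condition: `R` is the first row in which it fails, and `v`
is the largest value for which it fails there. -/
structure IsBad (Λ : ℕ → ℕ → ℕ) (v R : ℕ) : Prop where
  row : ∀ R' < R, ∀ u, cnt Λ (u + 1) (R' + 1) ≤ cnt Λ u R'
  bad : cnt Λ v R < cnt Λ (v + 1) (R + 1)
  max : ∀ u, v < u → cnt Λ (u + 1) (R + 1) ≤ cnt Λ u R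

theorem IsBad.unique {v' R' : ℕ} (h : IsBad Λ v R) (h' : IsBad Λ v' R') : v = v' ∧ R = R' := by
  have hR : R = R' := by
    rcases lt_trichotomy R R' with h1 | h1 | h1
    · have := h'.row R h1 v; have := h.bad; omega
    · exact h1
    · have := h.row R' h1 v'; have := h'.bad; omega
  subst hR
  refine ⟨?_, rfl⟩
  rcases lt_trichotomy v v' with h1 | h1 | h1
  · have := h.max v' h1; have := h'.bad; omega
  · exact h1
  · have := h'.max v h1; have := h.bad; omega

theorem cnt_eq_zero {N : ℕ} (hN : ∀ v, N ≤ v → ∀ r, Λ v r = ρ r) {u : ℕ} (hu : N ≤ u) (R : ℕ) :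
    cnt Λ u R = 0 := by
  apply sum_eq_zero
  intro i _
  rw [hN u hu, hN (u + 1) (by omega)]
  omega

theorem exists_isBad (h : IsPat κ ρ Λ) (hl : ¬ IsLat Λ) : ∃ v R, IsBad Λ v R := by
  classical
  obtain ⟨N, hN⟩ := h.top
  have hex : ∃ R v, cnt Λ v R < cnt Λ (v + 1) (R + 1) := by
    by_contra hc
    push Not at hc
    exact hl fun v R => hc R v
  have h1 := Nat.find_spec hex
  have h2 : ∀ R' < Nat.find hex, ∀ u, cnt Λ (u + 1) (R' + 1) ≤ cnt Λ u R' := by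
    intro R' hR' u
    have := Nat.find_min hex hR'
    push Not at this
    exact this u
  set R := Nat.find hex
  obtain ⟨v, hv⟩ := h1
  have hlt : ∀ u, cnt Λ u R < cnt Λ (u + 1) (R + 1) → u ≤ N := by
    intro u hu
    by_contra hc
    rw [cnt_eq_zero hN (u := u + 1) (by omega)] at hu
    omega
  refine ⟨Nat.findGreatest (fun u => cnt Λ u R < cnt Λ (u + 1) (R + 1)) N, R, h2, ?_, ?_⟩
  · exact Nat.findGreatest_spec (P := fun u => cnt Λ u R < cnt Λ (u + 1) (R + 1)) (hlt v hv) hv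
  · intro u hu
    by_contra hc
    exact Nat.findGreatest_is_greatest hu (hlt u (by omega)) (by simpa using hc)

/-- The column of the cell of row `R` at which the entries `v + 1` first outnumber the entries `v`
in the reading word, for `IsBad Λ v R`. -/
def badCol (Λ : ℕ → ℕ → ℕ) (v R : ℕ) : ℕ := Λ (v + 2) R + cnt Λ (v + 1) R - cnt Λ v R - 1

theorem IsBad.canTog (h : IsPat κ ρ Λ) (hb : IsBad Λ v R) :
    CanTog κ ρ v R (badCol Λ v R) Λ ∧
      badCol Λ v R + cnt Λ v R + 1 = Λ (v + 2) R + cnt Λ (v + 1) R := by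
  have h0 := hb.bad
  rw [cnt_succ] at h0
  have h1 := h.mono (v + 1) R
  simp only [Nat.add_assoc, Nat.reduceAdd] at h0 h1
  unfold badCol
  refine ⟨⟨h, by omega, ?_, ?_⟩, by omega⟩
  · rcases R with _ | r
    · simp only [cnt, range_zero, sum_empty]; omega
    · have := hb.row r (by omega) v
      have := cnt_mono Λ v (Nat.le_add_right r 1)
      omega
  · rintro r rfl
    have h2 := hb.row r (by omega) v
    have h3 := cnt_succ Λ v r
    have h4 := h.inter (v + 1) r
    have h5 := h.mono v r
    simp only [Nat.add_assoc, Nat.reduceAdd] at *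
    omega

theorem IsBad.lt (hs : IsShape κ ρ H) (h : IsPat κ ρ Λ) (hb : IsBad Λ v R) : R < H := by
  by_contra hc
  have h0 := hb.bad
  rw [cnt_succ, h.eq_zero hs _ (not_lt.1 hc), Nat.zero_sub, Nat.add_zero] at h0
  rcases R with _ | r
  · simp [cnt] at h0
  · have := hb.row r (by omega) v
    have := cnt_mono Λ v (Nat.le_add_right r 1)
    omega

/-- Toggling after the first violation exchanges the contents `(a, b)` of the values `v`, `v + 1`
for `(b - 1, a + 1)`, which is the transposition action shifted by the staircase. -/
theorem IsBad.cnt_star (hs : IsShape κ ρ H) (h : IsPat κ ρ Λ) (hb : IsBad Λ v R) :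
    cnt (tog v R (badCol Λ v R) Λ) v H + 1 = cnt Λ (v + 1) H ∧
    cnt (tog v R (badCol Λ v R) Λ) (v + 1) H = cnt Λ v H + 1 := by
  obtain ⟨hc, hj⟩ := hb.canTog h
  have h1 := hc.sum_tog hs (hb.lt hs h)
  have h2 := sum_cnt hc.isPat v H
  have h3 := sum_cnt hc.isPat (v + 1) H
  have h4 := sum_cnt h v H
  have h5 := sum_cnt h (v + 1) H
  have h6 := sum_cnt h v R
  have h7 := sum_cnt h (v + 1) R
  have e1 : ∑ i ∈ range H, tog v R (badCol Λ v R) Λ v i = ∑ i ∈ range H, Λ v i :=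
    sum_congr rfl fun i _ => tog_of_ne (by omega) i
  have e2 : ∑ i ∈ range H, tog v R (badCol Λ v R) Λ (v + 1 + 1) i =
      ∑ i ∈ range H, Λ (v + 2) i :=
    sum_congr rfl fun i _ => tog_of_ne (by omega) i
  rw [e1] at h2
  rw [e2] at h3
  simp only [Nat.add_assoc, Nat.reduceAdd] at *
  omega

/-- Toggling after the first violation does not move that violation. -/
theorem IsBad.star (h : IsPat κ ρ Λ) (hb : IsBad Λ v R) :
    IsBad (tog v R (badCol Λ v R) Λ) v R ∧
      badCol (tog v R (badCol Λ v R) Λ) v R = badCol Λ v R := by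
  obtain ⟨hc, hj⟩ := hb.canTog h
  have e : ∀ u R', R' ≤ R → cnt (tog v R (badCol Λ v R) Λ) u R' = cnt Λ u R' := fun u R' hR' =>
    cnt_congr (fun i hi => tog_of_lt (by omega) _) (fun i hi => tog_of_lt (by omega) _)
  refine ⟨⟨?_, ?_, ?_⟩, ?_⟩
  · intro R' hR' u
    rw [e _ _ hR', e _ _ hR'.le]
    exact hb.row R' hR' u
  · rw [cnt_succ, e _ _ le_rfl, e _ _ le_rfl, tog_of_ne (by omega)]
    have := hc.tog_le
    simp only [Nat.add_assoc, Nat.reduceAdd] at *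
    omega
  · intro u hu
    rw [cnt_succ, e _ _ le_rfl, e _ _ le_rfl, tog_of_ne (by omega), tog_of_ne (by omega),
      ← cnt_succ]
    exact hb.max u hu
  · change tog v R (badCol Λ v R) Λ (v + 2) R + cnt (tog v R (badCol Λ v R) Λ) (v + 1) R -
      cnt (tog v R (badCol Λ v R) Λ) v R - 1 = _
    rw [e _ _ le_rfl, e _ _ le_rfl, tog_of_ne (by omega)]
    rfl

open Classical in
/-- Stembridge's sign-reversing involution: a pattern which is not lattice is toggled at its first
violation; lattice patterns are fixed. -/
noncomputable def starPat (Λ : ℕ → ℕ → ℕ) : ℕ → ℕ → ℕ :=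
  if h : ∃ p : ℕ × ℕ, IsBad Λ p.1 p.2 then
    tog h.choose.1 h.choose.2 (badCol Λ h.choose.1 h.choose.2) Λ else Λ

theorem IsBad.star_eq (hb : IsBad Λ v R) : starPat Λ = tog v R (badCol Λ v R) Λ := by
  have h : ∃ p : ℕ × ℕ, IsBad Λ p.1 p.2 := ⟨(v, R), hb⟩
  obtain ⟨h1, h2⟩ := h.choose_spec.unique hb
  rw [starPat, dif_pos h, h1, h2]

end Tog

/-! ### Finiteness of patterns with bounded entries -/

section LRthm
variable {κ ρ : ℕ → ℕ} {H : ℕ} {Λ : ℕ → ℕ → ℕ}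

/-- Patterns of the tableaux of shape `ρ/κ` with all entries `< n`. -/
def PatSet (κ ρ : ℕ → ℕ) (n : ℕ) : Set (ℕ → ℕ → ℕ) :=
  {Λ | IsPat κ ρ Λ ∧ ∀ v, n ≤ v → ∀ r, Λ v r = ρ r}

theorem patSet_finite (hs : IsShape κ ρ H) (n : ℕ) : (PatSet κ ρ n).Finite := by
  let f : (ℕ → ℕ → ℕ) → (Fin n → Fin H → ℕ) := fun Λ v r => Λ v r
  have hf : Set.InjOn f (PatSet κ ρ n) := by
    intro Λ h Λ' h' e
    funext v r
    by_cases hv : v < n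
    · by_cases hr : r < H
      · exact congrFun (congrFun e ⟨v, hv⟩) ⟨r, hr⟩
      · rw [h.1.eq_zero hs _ (not_lt.1 hr), h'.1.eq_zero hs _ (not_lt.1 hr)]
    · rw [h.2 v (not_lt.1 hv), h'.2 v (not_lt.1 hv)]
  refine Set.Finite.of_finite_image (Set.Finite.subset
    (Set.Finite.pi' fun _ : Fin n => Set.Finite.pi' fun r : Fin H => Set.finite_Iic (ρ r)) ?_) hf
  rintro _ ⟨Λ, h, rfl⟩ v r
  exact h.1.le_top _ _

/-- `PatSet` as a finset. -/
noncomputable def pats (hs : IsShape κ ρ H) (n : ℕ) : Finset (ℕ → ℕ → ℕ) :=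
  (patSet_finite hs n).toFinset

theorem mem_pats (hs : IsShape κ ρ H) {n : ℕ} :
    Λ ∈ pats hs n ↔ IsPat κ ρ Λ ∧ ∀ v, n ≤ v → ∀ r, Λ v r = ρ r :=
  Set.Finite.mem_toFinset _

/-! ### Lattice patterns -/

theorem IsLat.cnt_zero (hl : IsLat Λ) (v : ℕ) : ∀ R ≤ v, cnt Λ v R = 0 := by
  induction v with
  | zero => intro R hR; simp [cnt, Nat.le_zero.1 hR]
  | succ v ih =>
    intro R hR
    rcases R with _ | R
    · simp [cnt]
    · have := hl v R
      have := ih R (by omega)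
      omega

/-- In a lattice tableau the entries of row `r` are at most `r`. -/
theorem IsLat.stable (h : IsPat κ ρ Λ) (hl : IsLat Λ) {v r : ℕ} (hr : r < v) : Λ v r = ρ r := by
  have hstep : ∀ u, v ≤ u → Λ u r = Λ v r := by
    intro u hu
    induction u, hu using Nat.le_induction with
    | base => rfl
    | succ u hu ih =>
      have h1 := hl.cnt_zero u (r + 1) (by omega)
      rw [cnt_succ] at h1
      have := h.mono u r
      omega
  obtain ⟨N, hN⟩ := h.top
  rw [← hstep (max N v) (le_max_right _ _), hN _ (le_max_left _ _)]

theorem IsLat.mem_pats (hs : IsShape κ ρ H) (h : IsPat κ ρ Λ) (hl : IsLat Λ) {n : ℕ}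
    (hn : H ≤ n) : Λ ∈ pats hs n := by
  rw [_root_.mem_pats]
  refine ⟨h, fun v hv r => ?_⟩
  by_cases hr : r < v
  · exact hl.stable h hr
  · rw [h.eq_zero hs _ (by omega), hs.zero _ (by omega)]

theorem IsLat.cnt_anti (hl : IsLat Λ) (v R : ℕ) : cnt Λ (v + 1) R ≤ cnt Λ v R :=
  (cnt_mono Λ (v + 1) (Nat.le_add_right R 1)).trans (hl v R)

theorem isShape_straight {ν : ℕ → ℕ} (h : ∀ r, ν (r + 1) ≤ ν r) (h0 : ∀ r, H ≤ r → ν r = 0) :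
    IsShape (fun _ => 0) ν H :=
  ⟨fun _ => le_rfl, h, fun _ => Nat.zero_le _, h0⟩

/-- The unique lattice pattern of straight shape `ν`: every cell of row `r` has entry `r`. -/
def canon (ν : ℕ → ℕ) (v r : ℕ) : ℕ := if r < v then ν r else 0

theorem canon_isPat {ν : ℕ → ℕ} (hs : IsShape (fun _ => 0) ν H) :
    IsPat (fun _ => 0) ν (canon ν) where
  bot r := by simp [canon]
  mono v r := by unfold canon; split_ifs <;> omega
  inter v r := by
    have := hs.antiOuter r
    unfold canon; split_ifs <;> omega
  top := by
    refine ⟨H, fun v hv r => ?_⟩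
    unfold canon
    split_ifs
    · rfl
    · rw [hs.zero _ (by omega)]

theorem cnt_canon (ν : ℕ → ℕ) (v R : ℕ) : cnt (canon ν) v R = if v < R then ν v else 0 := by
  unfold cnt canon
  have := sum_ite_eq (range R) v ν
  simp only [mem_range] at this
  rw [← this]
  apply sum_congr rfl
  intro i _
  split_ifs <;> omega

theorem canon_isLat {ν : ℕ → ℕ} (hs : IsShape (fun _ => 0) ν H) : IsLat (canon ν) := by
  intro v R
  rw [cnt_canon, cnt_canon]
  have := hs.antiOuter v
  split_ifs <;> omega

theorem eq_canon {ν : ℕ → ℕ} (h : IsPat (fun _ => 0) ν Λ) (hl : IsLat Λ) : Λ = canon ν := by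
  funext v r
  unfold canon
  split_ifs with hr
  · exact hl.stable h hr
  · have : ∀ v r, v ≤ r → Λ v r = 0 := by
      intro v
      induction v with
      | zero => intro r _; exact h.bot r
      | succ v ih =>
        intro r hr
        obtain ⟨s, rfl⟩ : ∃ s, r = s + 1 := ⟨r - 1, by omega⟩
        have := h.inter v s
        have := ih s (by omega)
        omega
    exact this v r (by omega)

theorem cnt_canon_full {ν : ℕ → ℕ} (hs : IsShape (fun _ => 0) ν H) (v : ℕ) :
    cnt (canon ν) v H = ν v := by
  rw [cnt_canon]
  split_ifs
  · rfl
  · rw [hs.zero _ (by omega)]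

/-! ### Alternants and the Littlewood–Richardson rule -/

open MvPolynomial

/-- The content of a pattern, as an exponent vector in the variables `x_0, …, x_n`. -/
noncomputable def wt (n H : ℕ) (Λ : ℕ → ℕ → ℕ) : Fin (n + 1) →₀ ℕ :=
  Finsupp.equivFunOnFinite.symm fun i => cnt Λ i H

@[simp] theorem wt_apply (n H : ℕ) (Λ : ℕ → ℕ → ℕ) (i : Fin (n + 1)) : wt n H Λ i = cnt Λ i H := rfl

/-- The exponent vector `(n, n - 1, …, 0)`. -/
noncomputable def stair (n : ℕ) : Fin (n + 1) →₀ ℕ :=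
  Finsupp.equivFunOnFinite.symm fun i => n - i

@[simp] theorem stair_apply (n : ℕ) (i : Fin (n + 1)) : stair n i = n - i := rfl

/-- Antisymmetrization of a polynomial. -/
noncomputable def alt {n : ℕ} (p : MvPolynomial (Fin (n + 1)) ℤ) : MvPolynomial (Fin (n + 1)) ℤ :=
  ∑ w : Equiv.Perm (Fin (n + 1)), (Equiv.Perm.sign w : ℤ) • rename w p

/-- The Schur polynomial of `ρ/κ` in `n + 1` variables. -/
noncomputable def spoly (hs : IsShape κ ρ H) (n : ℕ) : MvPolynomial (Fin (n + 1)) ℤ :=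
  ∑ Λ ∈ pats hs (n + 1), monomial (wt n H Λ) 1

theorem alt_rename {n : ℕ} (τ : Equiv.Perm (Fin (n + 1))) (p : MvPolynomial (Fin (n + 1)) ℤ) :
    alt (rename τ p) = (Equiv.Perm.sign τ : ℤ) • alt p := by
  unfold alt
  rw [smul_sum, ← Equiv.sum_comp (Equiv.mulRight τ⁻¹)]
  apply sum_congr rfl
  intro w _
  rw [rename_rename, smul_smul]
  congr 1
  · simp [mul_comm]
  · congr 2
    funext x
    simp

theorem alt_sum {n : ℕ} {ι : Type*} (s : Finset ι) (f : ι → MvPolynomial (Fin (n + 1)) ℤ) :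
    alt (∑ i ∈ s, f i) = ∑ i ∈ s, alt (f i) := by
  unfold alt
  rw [sum_comm]
  simp only [map_sum, smul_sum]

theorem alt_mul {n : ℕ} (p q : MvPolynomial (Fin (n + 1)) ℤ)
    (hq : ∀ w : Equiv.Perm (Fin (n + 1)), rename w q = q) : alt (p * q) = alt p * q := by
  unfold alt
  rw [sum_mul]
  apply sum_congr rfl
  intro w _
  rw [map_mul, hq, smul_mul_assoc]

theorem alt_stair_ne_zero (n : ℕ) : alt (monomial (stair n) (1 : ℤ)) ≠ 0 := by
  intro h
  have := congrArg (coeff (stair n)) h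
  unfold alt at this
  rw [coeff_sum, sum_eq_single 1] at this
  · simp at this
  · intro w _ hw
    rw [rename_monomial, coeff_smul, coeff_monomial, if_neg, smul_zero]
    intro he
    apply hw
    ext i
    have := DFunLike.congr_fun he (w i)
    rw [Finsupp.mapDomain_apply w.injective] at this
    simp only [stair_apply] at this
    have := i.2
    have := (w i).2
    simp only [Equiv.Perm.coe_one, id_eq]
    omega
  · simp

theorem wt_swap_full (hs : IsShape κ ρ H) (h : IsPat κ ρ Λ) {n : ℕ} (i : Fin n) :
    (wt n H Λ).mapDomain (Equiv.swap i.castSucc i.succ) =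
      wt n H (tog i 0 (Λ (i + 2) 0) Λ) := by
  obtain ⟨h1, h2⟩ := cnt_full hs h i
  ext x
  obtain ⟨y, rfl⟩ := (Equiv.swap i.castSucc i.succ).surjective x
  rw [Finsupp.mapDomain_apply (Equiv.injective _), wt_apply, wt_apply]
  by_cases hy : y = i.castSucc
  · subst hy
    rw [Equiv.swap_apply_left]
    simpa using h2.symm
  by_cases hy' : y = i.succ
  · subst hy'
    rw [Equiv.swap_apply_right]
    simpa using h1.symm
  rw [Equiv.swap_apply_of_ne_of_ne hy hy', CanTog.cnt_other]
  · intro e; apply hy; ext; simpa using e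
  · intro e; apply hy'; ext; simpa using e

theorem tog_mem_pats (hs : IsShape κ ρ H) {n v R j : ℕ} (hΛ : Λ ∈ pats hs (n + 1))
    (h : CanTog κ ρ v R j Λ) (hv : v < n) : tog v R j Λ ∈ pats hs (n + 1) := by
  rw [mem_pats] at hΛ ⊢
  refine ⟨h.isPat, fun u hu r => ?_⟩
  rw [tog_of_ne (by omega), hΛ.2 u hu]

/-- Schur polynomials are symmetric, by the Bender–Knuth involutions. -/
theorem spoly_symm (hs : IsShape κ ρ H) (n : ℕ) (w : Equiv.Perm (Fin (n + 1))) :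
    rename w (spoly hs n) = spoly hs n := by
  have hw : w ∈ Submonoid.closure
      (Set.range fun i : Fin n => Equiv.swap i.castSucc i.succ) := by
    rw [Equiv.Perm.mclosure_swap_castSucc_succ]; trivial
  induction hw using Submonoid.closure_induction with
  | one => simp
  | mul x y _ _ hx hy =>
    rw [Equiv.Perm.coe_mul, ← rename_rename, hy, hx]
  | mem x hx =>
    obtain ⟨i, rfl⟩ := hx
    simp only
    unfold spoly
    rw [map_sum]
    have hf : ∀ Λ ∈ pats hs (n + 1), tog i 0 (Λ (i + 2) 0) Λ ∈ pats hs (n + 1) := fun Λ hΛ =>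
      tog_mem_pats hs hΛ (canTog_full ((mem_pats hs).1 hΛ).1 i) i.2
    have hff : ∀ Λ ∈ pats hs (n + 1), tog i 0 ((tog i 0 (Λ (i + 2) 0) Λ) (i + 2) 0)
        (tog i 0 (Λ (i + 2) 0) Λ) = Λ := by
      intro Λ hΛ
      rw [tog_of_ne (by omega)]
      exact (canTog_full ((mem_pats hs).1 hΛ).1 i).tog_tog
    refine sum_bij' (fun Λ _ => tog i 0 (Λ (i + 2) 0) Λ) (fun Λ _ => tog i 0 (Λ (i + 2) 0) Λ)
      hf hf hff hff ?_
    intro Λ hΛ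
    rw [rename_monomial, wt_swap_full hs ((mem_pats hs).1 hΛ).1]

/-- `starPat` acts on `stair + wt` by an adjacent transposition. -/
theorem wt_swap_star (hs : IsShape κ ρ H) (h : IsPat κ ρ Λ) {n : ℕ} (i : Fin n) {R : ℕ}
    (hb : IsBad Λ i R) :
    (stair n + wt n H Λ).mapDomain (Equiv.swap i.castSucc i.succ) =
      stair n + wt n H (starPat Λ) := by
  rw [hb.star_eq]
  obtain ⟨h1, h2⟩ := hb.cnt_star hs h
  have hi := i.2
  ext x
  obtain ⟨y, rfl⟩ := (Equiv.swap i.castSucc i.succ).surjective x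
  rw [Finsupp.mapDomain_apply (Equiv.injective _), Finsupp.add_apply, Finsupp.add_apply,
    wt_apply, wt_apply, stair_apply, stair_apply]
  by_cases hy : y = i.castSucc
  · subst hy
    rw [Equiv.swap_apply_left]
    simp only [Fin.val_castSucc, Fin.val_succ]
    omega
  by_cases hy' : y = i.succ
  · subst hy'
    rw [Equiv.swap_apply_right]
    simp only [Fin.val_castSucc, Fin.val_succ]
    omega
  rw [Equiv.swap_apply_of_ne_of_ne hy hy', CanTog.cnt_other]
  · intro e; apply hy; ext; simpa using e
  · intro e; apply hy'; ext; simpa using e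

theorem IsBad.lt_of_mem (hs : IsShape κ ρ H) {n v R : ℕ} (hΛ : Λ ∈ pats hs (n + 1))
    (hb : IsBad Λ v R) : v < n := by
  by_contra hc
  have := hb.bad
  rw [cnt_eq_zero ((mem_pats hs).1 hΛ).2 (u := v + 1) (by omega)] at this
  omega

open Classical in
/-- Stembridge's identity: in the product of the staircase alternant with a skew Schur polynomial,
the contributions of the patterns that are not lattice cancel in pairs under `starPat`. -/
theorem alt_spoly (hs : IsShape κ ρ H) (n : ℕ) :
    alt (monomial (stair n) 1) * spoly hs n =
      ∑ Λ ∈ (pats hs (n + 1)).filter IsLat, alt (monomial (stair n + wt n H Λ) 1) := by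
  rw [← alt_mul _ _ (spoly_symm hs n), spoly, mul_sum, alt_sum]
  simp only [monomial_mul, mul_one]
  rw [← sum_filter_add_sum_filter_not (pats hs (n + 1)) IsLat, add_eq_left]
  have key : ∀ Λ ∈ (pats hs (n + 1)).filter (fun Λ => ¬ IsLat Λ),
      starPat Λ ∈ (pats hs (n + 1)).filter (fun Λ => ¬ IsLat Λ) ∧ starPat (starPat Λ) = Λ ∧
      alt (monomial (stair n + wt n H (starPat Λ)) (1 : ℤ)) =
        - alt (monomial (stair n + wt n H Λ) 1) := by
    intro Λ hΛ
    rw [mem_filter] at hΛ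
    have hp := ((mem_pats hs).1 hΛ.1).1
    obtain ⟨v, R, hb⟩ := exists_isBad hp hΛ.2
    have hv := hb.lt_of_mem hs hΛ.1
    obtain ⟨hb', hcol⟩ := hb.star hp
    refine ⟨?_, ?_, ?_⟩
    · rw [mem_filter, hb.star_eq]
      refine ⟨tog_mem_pats hs hΛ.1 (hb.canTog hp).1 hv, fun hl => ?_⟩
      have := hb'.bad
      have := hl v R
      omega
    · rw [hb.star_eq, hb'.star_eq, hcol, (hb.canTog hp).1.tog_tog]
    · rw [← wt_swap_star hs hp ⟨v, hv⟩ hb, ← rename_monomial, alt_rename,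
        Equiv.Perm.sign_swap (by simp [Fin.ext_iff])]
      simp
  refine sum_involution (fun Λ _ => starPat Λ) ?_ ?_ (fun Λ hΛ => (key Λ hΛ).1)
    (fun Λ hΛ => (key Λ hΛ).2.1)
  · intro Λ hΛ
    rw [(key Λ hΛ).2.2, add_neg_cancel]
  · intro Λ hΛ hne he
    have := (key Λ hΛ).2.2
    rw [he, self_eq_neg] at this
    exact hne this

theorem alt_spoly_straight {ν : ℕ → ℕ} (hs : IsShape (fun _ => 0) ν H) {n : ℕ} (hn : H ≤ n + 1) :
    alt (monomial (stair n) 1) * spoly hs n = alt (monomial (stair n + wt n H (canon ν)) 1) := by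
  classical
  rw [alt_spoly]
  have : (pats hs (n + 1)).filter IsLat = {canon ν} := by
    ext Λ
    rw [mem_filter, mem_singleton]
    constructor
    · rintro ⟨h1, h2⟩
      exact eq_canon ((mem_pats hs).1 h1).1 h2
    · rintro rfl
      exact ⟨(canon_isLat hs).mem_pats hs (canon_isPat hs) hn, canon_isLat hs⟩
  rw [this, sum_singleton]

theorem isShape_cnt (h : IsLat Λ) (H : ℕ) : IsShape (fun _ => 0) (fun v => cnt Λ v H) H :=
  isShape_straight (fun v => h.cnt_anti v H) (fun v hv => h.cnt_zero v H hv)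

theorem latSet_finite (hs : IsShape κ ρ H) : {Λ | IsPat κ ρ Λ ∧ IsLat Λ}.Finite := by
  apply (pats hs H).finite_toSet.subset
  rintro Λ ⟨h1, h2⟩
  exact h2.mem_pats hs h1 le_rfl

/-- The finite set of lattice patterns of `ρ/κ`. -/
noncomputable def lats (hs : IsShape κ ρ H) : Finset (ℕ → ℕ → ℕ) := (latSet_finite hs).toFinset

theorem mem_lats (hs : IsShape κ ρ H) : Λ ∈ lats hs ↔ IsPat κ ρ Λ ∧ IsLat Λ :=
  Set.Finite.mem_toFinset _

/-- Both sides agree after multiplication by the staircase alternant, which is not a zero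
divisor. -/
theorem spoly_expand (hs : IsShape κ ρ H) {n : ℕ} (hn : H ≤ n + 1) :
    spoly hs n = ∑ Λ ∈ (lats hs).attach,
      spoly (isShape_cnt ((mem_lats hs).1 Λ.2).2 H) n := by
  classical
  apply mul_left_cancel₀ (alt_stair_ne_zero n)
  rw [alt_spoly, mul_sum]
  have : (pats hs (n + 1)).filter IsLat = lats hs := by
    ext Λ
    rw [mem_filter, mem_lats]
    constructor
    · rintro ⟨h1, h2⟩
      exact ⟨((mem_pats hs).1 h1).1, h2⟩
    · rintro ⟨h1, h2⟩
      exact ⟨h2.mem_pats hs h1 hn, h2⟩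
  rw [this, ← sum_attach]
  apply sum_congr rfl
  intro Λ _
  rw [alt_spoly_straight _ hn]
  congr 4
  ext v
  simp only [wt_apply]
  rw [cnt_canon_full (isShape_cnt ((mem_lats hs).1 Λ.2).2 H)]

theorem schurOf_eq_coeff (hs : IsShape κ ρ H) {n : ℕ} (d : ℕ →₀ ℕ)
    (hd : ∀ v, n + 1 ≤ v → d v = 0) :
    schurOf (shapeCells κ ρ H) d =
      coeff (Finsupp.equivFunOnFinite.symm fun i : Fin (n + 1) => d i) (spoly hs n) := by
  classical
  rw [schurOf_eq_card hs, spoly, coeff_sum]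
  simp only [coeff_monomial]
  rw [sum_boole]
  congr 1
  apply Nat.subtype_card
  intro Λ
  rw [mem_filter, mem_pats]
  constructor
  · rintro ⟨⟨h1, h2⟩, h3⟩
    refine ⟨h1, fun v => ?_⟩
    by_cases hv : v < n + 1
    · exact DFunLike.congr_fun h3 (⟨v, hv⟩ : Fin (n + 1))
    · rw [cnt_eq_zero h2 (not_lt.1 hv), hd v (not_lt.1 hv)]
  · rintro ⟨h1, h2⟩
    refine ⟨⟨h1, fun v hv r => ?_⟩, ?_⟩
    · -- no value `u ≥ n + 1` occurs, so the pattern is constant from level `n + 1` on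
      by_cases hr : r < H
      · have hstep : ∀ u, v ≤ u → Λ u r = Λ v r := by
          intro u hu
          induction u, hu using Nat.le_induction with
          | base => rfl
          | succ u hu ih =>
            have h3 := h2 u
            rw [hd u (by omega), cnt, sum_eq_zero_iff] at h3
            have := h3 r (mem_range.2 hr)
            have := h1.mono u r
            omega
        obtain ⟨N, hN⟩ := h1.top
        rw [← hstep (max N v) (le_max_right _ _), hN _ (le_max_left _ _)]
      · rw [h1.eq_zero hs _ (not_lt.1 hr), hs.zero _ (not_lt.1 hr)]
    · ext i
      exact h2 i

/-- The Littlewood–Richardson rule: a skew Schur function is the sum, over its lattice tableaux, of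
the Schur functions indexed by their contents. -/
theorem schurOf_expand (hs : IsShape κ ρ H) (d : ℕ →₀ ℕ) :
    schurOf (shapeCells κ ρ H) d =
      ∑ Λ ∈ lats hs, schurOf (shapeCells (fun _ => 0) (fun v => cnt Λ v H) H) d := by
  obtain ⟨n, hn, hd⟩ : ∃ n, H ≤ n + 1 ∧ ∀ v, n + 1 ≤ v → d v = 0 := by
    refine ⟨max H (d.support.sup id), by omega, fun v hv => ?_⟩
    by_contra hc
    have := le_sup (f := id) (Finsupp.mem_support_iff.2 hc)
    simp only [id] at this
    omega
  rw [schurOf_eq_coeff hs d hd, spoly_expand hs hn, coeff_sum, ← sum_attach (lats hs)]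
  apply sum_congr rfl
  intro Λ _
  rw [← schurOf_eq_coeff _ d hd]

end LRthm

/-! ### Schur expansions -/

section Expand
variable {κ ρ : ℕ → ℕ} {H : ℕ} {Λ : ℕ → ℕ → ℕ}

open Classical in
theorem lrCount_eq_lats (hs : IsShape κ ρ H) (d : ℕ →₀ ℕ) :
    lrCount (shapeCells κ ρ H) d = #{Λ ∈ lats hs | ∀ v, cnt Λ v H = d v} := by
  rw [lrCount_eq_card hs]
  apply Nat.subtype_card
  intro Λ
  rw [mem_filter, mem_lats, and_assoc]

/-- The content of a lattice pattern with `H` rows; the entries are `< H`, so summing over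
`range H` loses nothing (`ctF_apply`). -/
noncomputable def ctF (H : ℕ) (Λ : ℕ → ℕ → ℕ) : ℕ →₀ ℕ :=
  ∑ v ∈ range H, Finsupp.single v (cnt Λ v H)

theorem ctF_apply (hl : IsLat Λ) (H v : ℕ) : ctF H Λ v = cnt Λ v H := by
  simp only [ctF, Finsupp.finsetSum_apply, Finsupp.single_apply, sum_ite_eq', mem_range]
  split_ifs with h
  · rfl
  · rw [hl.cnt_zero v H (not_lt.1 h)]

theorem ctF_eq_iff (hl : IsLat Λ) (H : ℕ) (d : ℕ →₀ ℕ) : ctF H Λ = d ↔ ∀ v, cnt Λ v H = d v := by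
  rw [DFunLike.ext_iff]
  simp only [ctF_apply hl]

theorem diagramOfF_eq {d : ℕ →₀ ℕ} {ν : ℕ → ℕ} (h : ∀ v, d v = ν v) (h0 : ∀ v, H ≤ v → ν v = 0) :
    diagramOfF d = shapeCells (fun _ => 0) ν H := by
  ext ⟨i, j⟩
  rw [mem_shapeCells]
  simp only [diagramOfF, mem_biUnion, Finsupp.mem_support_iff, mem_image, mem_range, Prod.mk.injEq,
    existsAndEq, true_and, h]
  constructor
  · rintro ⟨a, b, c, d, rfl⟩
    refine ⟨?_, by omega, b⟩
    by_contra hc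
    exact a (h0 i (not_lt.1 hc))
  · rintro ⟨a, _, b⟩
    exact ⟨by omega, b, trivial⟩

/-- The partitions occurring in the Schur expansion of `ρ/κ`. -/
noncomputable def lrSupp (hs : IsShape κ ρ H) : Finset (ℕ →₀ ℕ) :=
  open Classical in (lats hs).image (ctF H)

theorem mem_lrSupp (hs : IsShape κ ρ H) {d : ℕ →₀ ℕ} (hd : lrCount (shapeCells κ ρ H) d ≠ 0) :
    d ∈ lrSupp hs := by
  classical
  rw [lrCount_eq_lats hs, card_ne_zero] at hd
  obtain ⟨Λ, hΛ⟩ := hd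
  rw [mem_filter] at hΛ
  exact mem_image.2 ⟨Λ, hΛ.1, (ctF_eq_iff ((mem_lats hs).1 hΛ.1).2 H d).2 hΛ.2⟩

theorem lrSupp_anti (hs : IsShape κ ρ H) {d : ℕ →₀ ℕ} (hd : d ∈ lrSupp hs) (i : ℕ) :
    d (i + 1) ≤ d i := by
  classical
  obtain ⟨Λ, hΛ, rfl⟩ := mem_image.1 hd
  have hl := ((mem_lats hs).1 hΛ).2
  rw [ctF_apply hl, ctF_apply hl]
  exact hl.cnt_anti _ _

theorem schurOf_eq_sum (hs : IsShape κ ρ H) {S : Finset (ℕ →₀ ℕ)} (hS : lrSupp hs ⊆ S) :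
    schurOf (shapeCells κ ρ H) =
      ∑ d ∈ S, (lrCount (shapeCells κ ρ H) d : ℤ) • schurOf (diagramOfF d) := by
  classical
  have h1 : schurOf (shapeCells κ ρ H) = ∑ Λ ∈ lats hs, schurOf (diagramOfF (ctF H Λ)) := by
    have : ∀ Λ ∈ lats hs, schurOf (diagramOfF (ctF H Λ)) =
        schurOf (shapeCells (fun _ => 0) (fun v => cnt Λ v H) H) := by
      intro Λ hΛ
      have hl := ((mem_lats hs).1 hΛ).2
      rw [diagramOfF_eq (H := H) (ctF_apply hl H) (fun v hv => hl.cnt_zero v H hv)]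
    rw [sum_congr rfl this]
    apply MvPowerSeries.ext
    intro d
    rw [map_sum]
    exact schurOf_expand hs d
  rw [h1, ← sum_fiberwise_of_maps_to (g := ctF H) (t := S)
    (fun Λ hΛ => hS (mem_image_of_mem _ hΛ))]
  apply sum_congr rfl
  intro d _
  rw [sum_congr rfl (g := fun _ => schurOf (diagramOfF d))
    (fun Λ hΛ => by rw [(mem_filter.1 hΛ).2]), sum_const, lrCount_eq_lats hs, natCast_zsmul]
  congr 2
  apply filter_congr
  intro Λ hΛ
  exact ctF_eq_iff ((mem_lats hs).1 hΛ).2 H d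

theorem schurPositive_of_sum (S : Finset (ℕ →₀ ℕ)) (z : (ℕ →₀ ℕ) → ℤ)
    (hS : ∀ d ∈ S, ∀ i, d (i + 1) ≤ d i) (hz : ∀ d ∈ S, 0 ≤ z d) :
    SchurPositive (∑ d ∈ S, z d • schurOf (diagramOfF d)) := by
  refine ⟨S, fun d => (z d).toNat, hS, sum_congr rfl fun d hd => ?_⟩
  rw [Int.toNat_of_nonneg (hz d hd)]

end Expand

/-! ### The diagrams `S(F, E; 1)` with a rectangular foundation -/

section Foundation
variable {κ ρ : ℕ → ℕ} {h : ℕ} {Λ : ℕ → ℕ → ℕ}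

/-- A skew shape with at least one row whose last row `h - 1` is nonempty, so that `h` is its
height and its bottom-left cell is `(h - 1, κ (h - 1))`. -/
structure IsNE (κ ρ : ℕ → ℕ) (h : ℕ) : Prop extends IsShape κ ρ h where
  pos : 0 < h
  last : κ (h - 1) < ρ (h - 1)

/-- Row bounds of a shape of height `h` moved one column to the right, followed by `k` rows with
bound `c`. -/
def rowsS (κ : ℕ → ℕ) (h k c : ℕ) (r : ℕ) : ℕ :=
  if r < h then κ r + 1 else if r < h + k then c else 0

theorem IsNE.ht (hs : IsNE κ ρ h) : ht (shapeCells κ ρ h) = h := by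
  apply le_antisymm
  · apply Finset.sup_le
    rintro ⟨i, j⟩ hc
    exact ((mem_shapeCells i j).1 hc).1
  · have h1 := hs.pos
    have hm : (h - 1, κ (h - 1)) ∈ shapeCells κ ρ h :=
      (mem_shapeCells _ _).2 ⟨by omega, le_rfl, hs.last⟩
    have := le_sup (f := fun c : ℕ × ℕ => c.1 + 1) hm
    simp only [Nat.sub_add_cancel h1] at this
    exact this

theorem IsNE.blCol (hs : IsNE κ ρ h) : blCol (shapeCells κ ρ h) = κ (h - 1) := by
  have h1 := hs.pos
  unfold _root_.blCol
  rw [hs.ht]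
  have hm : (h - 1, κ (h - 1)) ∈ shapeCells κ ρ h :=
    (mem_shapeCells _ _).2 ⟨by omega, le_rfl, hs.last⟩
  apply le_antisymm
  · exact Nat.sInf_le hm
  · exact ((mem_shapeCells _ _).1 (Nat.sInf_mem (s := {j | (h - 1, j) ∈ shapeCells κ ρ h})
      ⟨_, hm⟩)).2.1

theorem IsNE.lastRowLen (hs : IsNE κ ρ h) :
    lastRowLen (shapeCells κ ρ h) = ρ (h - 1) - κ (h - 1) := by
  have h1 := hs.pos
  unfold _root_.lastRowLen
  rw [hs.ht, card_filter_shapeCells, sum_eq_single (h - 1)]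
  · simp
  · intro b _ hb
    simp [hb]
  · intro hh; rw [mem_range] at hh; omega

theorem tlCol_rect {F : Diagram} {k w : ℕ} (hF : ∀ i j, (i, j) ∈ F ↔ i < k ∧ j < w)
    (hk : 0 < k) (hw : 0 < w) : tlCol F = 0 := by
  have h1 : topRow F = 0 :=
    Nat.le_zero.1 (Nat.sInf_le (s := {i | ∃ j, (i, j) ∈ F}) ⟨0, (hF _ _).2 ⟨hk, hw⟩⟩)
  unfold tlCol
  rw [h1]
  exact Nat.le_zero.1 (Nat.sInf_le (s := {j | (0, j) ∈ F}) ((hF _ _).2 ⟨hk, hw⟩))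

/-- `S(F, E; 1)` for a `k × w` rectangle `F`, as a skew shape. Its rows `≥ h` begin in column
`κ (h - 1)`, while `E` is moved one column to the right. -/
theorem IsNE.SDiagG_rect (hs : IsNE κ ρ h) {F : Diagram} {k w : ℕ}
    (hF : ∀ i j, (i, j) ∈ F ↔ i < k ∧ j < w) (hk : 0 < k) (hw : 0 < w) :
    SDiagG F (shapeCells κ ρ h) 1 =
      shapeCells (rowsS κ h k (κ (h - 1))) (rowsS ρ h k (κ (h - 1) + w)) (h + k) := by
  unfold SDiagG
  rw [tlCol_rect hF hk hw, hs.ht, hs.blCol]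
  ext ⟨i, j⟩
  rw [mem_shapeCells]
  simp only [mem_union, mem_image, Prod.exists, mem_shapeCells, hF, Prod.mk.injEq]
  constructor
  · rintro (⟨a, b, h1, rfl, rfl⟩ | ⟨a, b, h1, rfl, rfl⟩)
    · simp only [rowsS, if_pos h1.1]
      omega
    · have e1 : ¬ (a + h < h) := by omega
      have e2 : a + h < h + k := by omega
      simp only [rowsS, if_neg e1, if_pos e2]
      omega
  · rintro ⟨h1, h2, h3⟩
    by_cases hi : i < h
    · simp only [rowsS, if_pos hi] at h2 h3
      exact Or.inl ⟨i, j - 1, ⟨hi, by omega, by omega⟩, rfl, by omega⟩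
    · simp only [rowsS, if_neg hi, if_pos h1] at h2 h3
      exact Or.inr ⟨i - h, j - κ (h - 1), ⟨by omega, by omega⟩, by omega, by omega⟩

theorem mem_colD (m i j : ℕ) : (i, j) ∈ colD m ↔ i < m ∧ j < 1 := by
  simp only [colD, mem_image, mem_range, Prod.mk.injEq]
  constructor
  · rintro ⟨a, h1, rfl, rfl⟩; omega
  · rintro ⟨h1, h2⟩; exact ⟨i, h1, rfl, by omega⟩

theorem mem_rowD (m i j : ℕ) : (i, j) ∈ rowD m ↔ i < 1 ∧ j < m := by
  simp only [rowD, mem_image, mem_range, Prod.mk.injEq]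
  constructor
  · rintro ⟨a, h1, rfl, rfl⟩; omega
  · rintro ⟨h1, h2⟩; exact ⟨j, h2, by omega, rfl⟩

theorem IsNE.isShape_S (hs : IsNE κ ρ h) {k w : ℕ} (hw : w ≤ ρ (h - 1) - κ (h - 1) + 1) :
    IsShape (rowsS κ h k (κ (h - 1))) (rowsS ρ h k (κ (h - 1) + w)) (h + k) := by
  have hp := hs.pos
  have hl := hs.last
  have key : ∀ r, r < h → ¬ r + 1 < h → r = h - 1 := by intro r; omega
  constructor
  · intro r
    have := hs.antiInner r
    unfold rowsS
    by_cases h1 : r < h <;> by_cases h2 : r + 1 < h <;> simp only [h1, h2, if_true, if_false]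
    · omega
    · have := key r h1 h2
      subst this
      split_ifs <;> omega
    · omega
    · split_ifs <;> omega
  · intro r
    have := hs.antiOuter r
    unfold rowsS
    by_cases h1 : r < h <;> by_cases h2 : r + 1 < h <;> simp only [h1, h2, if_true, if_false]
    · omega
    · have := key r h1 h2
      subst this
      split_ifs <;> omega
    · omega
    · split_ifs <;> omega
  · intro r
    have := hs.le r
    unfold rowsS
    split_ifs <;> omega
  · intro r hr
    unfold rowsS
    split_ifs <;> omega

/-- Restriction of a pattern of `S(F, E; 1)` to the rows of `E`, moved back by one column. -/
def res (h : ℕ) (Λ : ℕ → ℕ → ℕ) (v r : ℕ) : ℕ := if r < h then Λ v r - 1 else 0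

/-- The pattern of `S(F, E; 1)` that restricts to `Λ` on `E` and is given by `g` on the `k` rows of
the foundation. -/
def glue (h k : ℕ) (g : ℕ → ℕ → ℕ) (Λ : ℕ → ℕ → ℕ) (v r : ℕ) : ℕ :=
  if r < h then Λ v r + 1 else if r < h + k then g v (r - h) else 0

theorem glue_lt {k : ℕ} {g : ℕ → ℕ → ℕ} {r : ℕ} (hr : r < h) (v : ℕ) :
    glue h k g Λ v r = Λ v r + 1 := by simp [glue, hr]

theorem glue_add {k : ℕ} {g : ℕ → ℕ → ℕ} {i : ℕ} (hi : i < k) (v : ℕ) :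
    glue h k g Λ v (h + i) = g v i := by simp [glue, hi]

theorem glue_ge {k : ℕ} {g : ℕ → ℕ → ℕ} {r : ℕ} (hr : h + k ≤ r) (v : ℕ) :
    glue h k g Λ v r = 0 := by
  unfold glue
  split_ifs <;> omega

theorem cnt_stable {H : ℕ} (hs : IsShape κ ρ H) (hp : IsPat κ ρ Λ) (v : ℕ) {R : ℕ} (hR : H ≤ R) :
    cnt Λ v R = cnt Λ v H := by
  symm
  apply sum_subset (range_mono hR)
  intro i _ hi
  rw [mem_range] at hi
  rw [hp.eq_zero hs _ (not_lt.1 hi)]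
  omega

section
variable {k c : ℕ}

theorem IsPat.ge_one (hp : IsPat (rowsS κ h k (κ (h - 1))) (rowsS ρ h k c) Λ) {r : ℕ} (hr : r < h)
    (v : ℕ) : κ r + 1 ≤ Λ v r := by
  have := hp.bot_le v r
  simpa [rowsS, hr] using this

theorem IsPat.cnt_res (hp : IsPat (rowsS κ h k (κ (h - 1))) (rowsS ρ h k c) Λ) (v : ℕ) {R : ℕ}
    (hR : R ≤ h) : cnt (res h Λ) v R = cnt Λ v R := by
  apply sum_congr rfl
  intro i hi
  rw [mem_range] at hi
  have h1 := hp.ge_one (r := i) (by omega) v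
  have h2 := hp.ge_one (r := i) (by omega) (v + 1)
  simp only [res]
  rw [if_pos (by omega), if_pos (by omega)]
  omega

theorem IsPat.res (hs : IsNE κ ρ h) (hp : IsPat (rowsS κ h k (κ (h - 1))) (rowsS ρ h k c) Λ) :
    IsPat κ ρ (res h Λ) where
  bot r := by
    unfold _root_.res
    split_ifs with hr
    · rw [hp.bot]; simp [rowsS, hr]
    · have := hs.le r; have := hs.zero r (by omega); omega
  mono v r := by
    have := hp.mono v r
    unfold _root_.res
    split_ifs <;> omega
  inter v r := by
    have := hp.inter v r
    unfold _root_.res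
    split_ifs <;> omega
  top := by
    obtain ⟨N, hN⟩ := hp.top
    refine ⟨N, fun v hv r => ?_⟩
    unfold _root_.res
    split_ifs with hr
    · rw [hN v hv]; simp [rowsS, hr]
    · rw [hs.zero r (by omega)]

theorem IsPat.res_lat (hs : IsNE κ ρ h) (hp : IsPat (rowsS κ h k (κ (h - 1))) (rowsS ρ h k c) Λ)
    (hl : IsLat Λ) : IsLat (_root_.res h Λ) := by
  have hpos := hs.pos
  have hlow : ∀ v R, R < h → cnt (_root_.res h Λ) (v + 1) (R + 1) ≤ cnt (_root_.res h Λ) v R := by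
    intro v R hR
    rw [hp.cnt_res _ (by omega), hp.cnt_res _ (by omega)]
    exact hl v R
  intro v R
  by_cases hR : R < h
  · exact hlow v R hR
  · rw [cnt_stable hs.toIsShape (hp.res hs) _ (R := R + 1) (by omega),
      cnt_stable hs.toIsShape (hp.res hs) _ (R := R) (by omega)]
    have := hlow v (h - 1) (by omega)
    rw [Nat.sub_add_cancel hpos] at this
    exact this.trans (cnt_mono _ _ (by omega))

theorem eq_glue_res (hs : IsShape (rowsS κ h k (κ (h - 1))) (rowsS ρ h k c) (h + k))
    (hp : IsPat (rowsS κ h k (κ (h - 1))) (rowsS ρ h k c) Λ) :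
    Λ = glue h k (fun v i => Λ v (h + i)) (res h Λ) := by
  funext v r
  by_cases hr : r < h
  · rw [glue_lt hr]
    have := hp.ge_one hr v
    simp only [res, hr, if_true]
    omega
  · by_cases hr' : r < h + k
    · obtain ⟨i, rfl⟩ : ∃ i, r = h + i := ⟨r - h, by omega⟩
      rw [glue_add (by omega)]
    · rw [glue_ge (by omega), hp.eq_zero hs _ (by omega)]

theorem res_glue (hs : IsNE κ ρ h) (hp : IsPat κ ρ Λ) (g : ℕ → ℕ → ℕ) :
    res h (glue h k g Λ) = Λ := by
  funext v r
  unfold res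
  split_ifs with hr
  · rw [glue_lt hr]; omega
  · rw [hp.eq_zero hs.toIsShape _ (by omega)]

theorem cnt_glue_le {g : ℕ → ℕ → ℕ} (v : ℕ) {R : ℕ} (hR : R ≤ h) :
    cnt (glue h k g Λ) v R = cnt Λ v R := by
  apply sum_congr rfl
  intro i hi
  rw [mem_range] at hi
  rw [glue_lt (by omega), glue_lt (by omega)]
  omega

theorem cnt_glue_add {g : ℕ → ℕ → ℕ} (v : ℕ) {i : ℕ} (hi : i ≤ k) :
    cnt (glue h k g Λ) v (h + i) = cnt Λ v h + ∑ i' ∈ range i, (g (v + 1) i' - g v i') := by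
  rw [cnt, sum_range_add]
  congr 1
  · exact cnt_glue_le (Λ := Λ) (g := g) (k := k) v le_rfl
  · apply sum_congr rfl
    intro i' hi'
    rw [mem_range] at hi'
    rw [glue_add (by omega), glue_add (by omega)]

theorem IsNE.isPat_glue (hs : IsNE κ ρ h) (hp : IsPat κ ρ Λ) {g : ℕ → ℕ → ℕ}
    (h0 : ∀ i < k, g 0 i = κ (h - 1)) (h1 : ∀ v, ∀ i < k, g v i ≤ g (v + 1) i)
    (h2 : ∀ v i, i + 1 < k → g (v + 1) (i + 1) ≤ g v i)
    (h3 : ∀ v, 0 < k → g (v + 1) 0 ≤ Λ v (h - 1) + 1)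
    (h4 : ∃ N, ∀ v, N ≤ v → ∀ i < k, g v i = c) :
    IsPat (rowsS κ h k (κ (h - 1))) (rowsS ρ h k c) (glue h k g Λ) where
  bot r := by
    unfold glue rowsS
    rw [hp.bot]
    split_ifs
    · rfl
    · exact h0 _ (by omega)
    · rfl
  mono v r := by
    unfold glue
    have := hp.mono v r
    split_ifs
    · omega
    · exact h1 _ _ (by omega)
    · omega
  inter v r := by
    have hpos := hs.pos
    by_cases ha : r + 1 < h
    · rw [glue_lt ha, glue_lt (by omega)]
      have := hp.inter v r
      omega
    by_cases hb : r < h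
    · obtain rfl : r = h - 1 := by omega
      rw [Nat.sub_add_cancel hpos, glue_lt hb]
      rcases Nat.eq_zero_or_pos k with rfl | hk
      · rw [glue_ge (by omega)]; omega
      · exact (glue_add (i := 0) hk (v + 1)).trans_le (h3 v hk)
    obtain ⟨i, rfl⟩ : ∃ i, r = h + i := ⟨r - h, by omega⟩
    by_cases hc : i + 1 < k
    · rw [Nat.add_assoc, glue_add hc, glue_add (by omega)]
      exact h2 v i hc
    · rw [glue_ge (by omega)]; omega
  top := by
    obtain ⟨N, hN⟩ := h4
    obtain ⟨N', hN'⟩ := hp.top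
    refine ⟨max N N', fun v hv r => ?_⟩
    unfold glue rowsS
    split_ifs
    · rw [hN' v (by omega)]
    · exact hN v (by omega) _ (by omega)
    · rfl

end

end Foundation

/-! ### Columns and rows below a skew shape -/

section Pieri
variable {κ ρ : ℕ → ℕ} {h m : ℕ} {Λ : ℕ → ℕ → ℕ} {ν μ : ℕ → ℕ}

/-- The number of cells of `μ/ν` in the rows `< v`. -/
def exc (ν μ : ℕ → ℕ) (v : ℕ) : ℕ := ∑ u ∈ range v, (μ u - ν u)

theorem exc_zero (ν μ : ℕ → ℕ) : exc ν μ 0 = 0 := rfl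

theorem exc_succ (ν μ : ℕ → ℕ) (v : ℕ) : exc ν μ (v + 1) = exc ν μ v + (μ v - ν v) :=
  sum_range_succ _ _

theorem exc_mono (ν μ : ℕ → ℕ) : Monotone (exc ν μ) :=
  monotone_nat_of_le_succ fun v => by rw [exc_succ]; omega

/-- `μ` is a partition and `μ/ν` is a vertical strip of size `m`. -/
structure Vrel (m : ℕ) (ν μ : ℕ → ℕ) : Prop where
  le : ∀ v, ν v ≤ μ v
  le_succ : ∀ v, μ v ≤ ν v + 1
  anti : ∀ v, μ (v + 1) ≤ μ v
  size : ∃ N, ∀ n, N ≤ n → exc ν μ n = m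

/-- `μ/ν` is a horizontal strip of size `m` having at most one cell in row `0`. -/
structure Hrel (m : ℕ) (ν μ : ℕ → ℕ) : Prop where
  le : ∀ v, ν v ≤ μ v
  zero : μ 0 ≤ ν 0 + 1
  inter : ∀ v, μ (v + 1) ≤ ν v
  size : ∃ N, ∀ n, N ≤ n → exc ν μ n = m

/-- If consecutive parts of `ν` differ by at most one, a horizontal strip with at most one cell in
row `0` has at most one cell in every row. -/
theorem Hrel.vrel (hH : Hrel m ν μ) (hf : ∀ v, ν v ≤ ν (v + 1) + 1) : Vrel m ν μ where
  le := hH.le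
  le_succ v := by
    cases v with
    | zero => exact hH.zero
    | succ v => exact (hH.inter v).trans (hf v)
  anti v := (hH.inter v).trans (hH.le v)
  size := hH.size

theorem Vrel.exc_le (hV : Vrel m ν μ) (v : ℕ) : exc ν μ v ≤ m := by
  obtain ⟨N, hN⟩ := hV.size
  rw [← hN (max N v) (le_max_left _ _)]
  exact exc_mono _ _ (le_max_right _ _)

theorem exc_eq {x : ℕ → ℕ} (hx0 : x 0 = 0) (hx : ∀ v, ν v + x (v + 1) = μ v + x v)
    (hm : ∀ v, x v ≤ x (v + 1)) : ∀ v, exc ν μ v = x v := by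
  intro v
  induction v with
  | zero => rw [hx0, exc_zero]
  | succ v ih =>
    rw [exc_succ, ih]
    have := hx v
    have := hm v
    omega

/-- The pattern of a single column in column `b`, with `k v` entries `< v`. -/
def colG (b : ℕ) (k : ℕ → ℕ) (v i : ℕ) : ℕ := b + if i < k v then 1 else 0

theorem sum_colG (b : ℕ) {k : ℕ → ℕ} {v : ℕ} (hk : k v ≤ k (v + 1)) (n : ℕ) :
    ∑ i ∈ range n, (colG b k (v + 1) i - colG b k v i) + min n (k v) = min n (k (v + 1)) := by
  induction n with
  | zero => simp
  | succ n ih =>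
    rw [sum_range_succ]
    unfold colG at ih ⊢
    split_ifs <;> omega

/-- A weakly decreasing sequence with values in `{b, b + 1}` is determined by its sum. -/
theorem sum_ind (b : ℕ) {x : ℕ → ℕ} (hx : ∀ i, x (i + 1) ≤ x i) :
    ∀ n, (∀ i < n, b ≤ x i ∧ x i ≤ b + 1) →
      (∑ i ∈ range n, (x i - b) ≤ n) ∧
      ∀ i < n, x i = b + if i < ∑ i ∈ range n, (x i - b) then 1 else 0 := by
  intro n
  induction n with
  | zero => simp
  | succ n ih =>
    intro hb
    obtain ⟨h1, h2⟩ := ih fun i hi => hb i (by omega)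
    rw [sum_range_succ]
    have hn := hb n (by omega)
    refine ⟨by omega, fun i hi => ?_⟩
    by_cases hxn : x n = b
    · rcases Nat.lt_succ_iff_lt_or_eq.1 hi with hi | rfl
      · rw [h2 i hi, hxn]; simp
      · rw [if_neg (by omega)]; exact hxn
    · have ha := antitone_nat_of_succ_le hx
      have hall : ∀ j ∈ range n, x j - b = 1 := fun j hj => by
        have hj := mem_range.1 hj
        have := hb j (by omega)
        have := ha (show j ≤ n by omega)
        omega
      rw [sum_congr rfl hall]
      have := hb i hi
      have := ha (show i ≤ n by omega)
      simp only [sum_const, card_range, smul_eq_mul, mul_one]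
      rw [if_pos (by omega)]
      omega

/-- A lattice tableau of `S(1^m, E; 1)` of content `μ` is determined by its restriction to `E`, of
content `ν` say, and `μ/ν` is a vertical strip: the column is strictly increasing. -/
theorem col_key (hs : IsNE κ ρ h)
    (hp : IsPat (rowsS κ h m (κ (h - 1))) (rowsS ρ h m (κ (h - 1) + 1)) Λ) (hl : IsLat Λ)
    (hμ : ∀ v, cnt Λ v (h + m) = μ v) :
    Vrel m (fun v => cnt (res h Λ) v h) μ ∧
      Λ = glue h m (colG (κ (h - 1)) (exc (fun v => cnt (res h Λ) v h) μ)) (res h Λ) := by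
  have hS := hs.isShape_S (k := m) (w := 1) (by omega)
  set b := κ (h - 1) with hb
  set x : ℕ → ℕ → ℕ := fun v i => Λ v (h + i) with hx
  set K : ℕ → ℕ := fun v => ∑ i ∈ range m, (x v i - b) with hK
  have hν : ∀ v, cnt (res h Λ) v h = cnt Λ v h := fun v => hp.cnt_res v le_rfl
  simp only [hν]
  have hbd : ∀ v, ∀ i < m, b ≤ x v i ∧ x v i ≤ b + 1 := by
    intro v i hi
    have h1 := hp.bot_le v (h + i)
    have h2 := hp.le_top v (h + i)
    simpa [rowsS, hi] using And.intro h1 h2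
  have hanti : ∀ v i, x v (i + 1) ≤ x v i := fun v i =>
    (hp.mono v (h + (i + 1))).trans (hp.inter v (h + i))
  have hform : ∀ v, ∀ i < m, x v i = b + if i < K v then 1 else 0 := fun v =>
    (sum_ind b (hanti v) m (hbd v)).2
  have hKle : ∀ v, K v ≤ m := fun v => (sum_ind b (hanti v) m (hbd v)).1
  have hKmono : ∀ v, K v ≤ K (v + 1) := fun v =>
    sum_le_sum fun i _ => Nat.sub_le_sub_right (hp.mono v (h + i)) b
  have hsum : ∀ v, cnt Λ v h + K (v + 1) = μ v + K v := by
    intro v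
    rw [← hμ v, cnt, cnt, sum_range_add, add_assoc]
    congr 1
    rw [← sum_add_distrib]
    apply sum_congr rfl
    intro i hi
    have h1 := hbd v i (mem_range.1 hi)
    have h2 := hp.mono v (h + i)
    simp only [hx] at h1 ⊢
    omega
  have hK0 : K 0 = 0 := by
    apply sum_eq_zero
    intro i hi
    have := hp.bot (h + i)
    simp only [rowsS, mem_range.1 hi, Nat.add_lt_add_iff_left, if_true, hx] at this ⊢
    simp at this
    omega
  have hexc := exc_eq (ν := fun v => cnt Λ v h) hK0 hsum hKmono
  have hK1 : ∀ v, K (v + 1) ≤ K v + 1 := by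
    intro v
    by_contra hc
    have h1 := hform (v + 1) (K v + 1) (by have := hKle (v + 1); omega)
    have h2 := hform v (K v) (by have := hKle (v + 1); omega)
    rw [if_pos (by omega)] at h1
    rw [if_neg (by omega)] at h2
    have : x (v + 1) (K v + 1) ≤ x v (K v) := hp.inter v (h + K v)
    omega
  constructor
  · constructor
    · intro v; have := hsum v; have := hKmono v; omega
    · intro v; have := hsum v; have := hK1 v; omega
    · intro v; rw [← hμ, ← hμ]; exact hl.cnt_anti _ _
    · obtain ⟨N, hN⟩ := hp.top
      refine ⟨N, fun n hn => ?_⟩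
      rw [hexc]
      have : ∀ i ∈ range m, x n i - b = 1 := by
        intro i hi
        have := hN n hn (h + i)
        simp only [rowsS, mem_range.1 hi, Nat.add_lt_add_iff_left, if_true] at this
        simp at this
        simp only [hx]
        omega
      simp only [hK]
      rw [sum_congr rfl this]
      simp
  · have h1 := eq_glue_res hS hp
    refine h1.trans ?_
    funext v r
    unfold glue
    split_ifs with ha hc
    · rfl
    · rw [colG, hexc]
      exact hform v (r - h) (by omega)
    · rfl

/-- Conversely, a lattice tableau of `E` with content `ν` extends to one of `S(1^m, E; 1)` with
content `μ` for every vertical strip `μ/ν`. The cells of `E` impose no further condition, as the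
foundation shares no column with `E`. -/
theorem col_glue (hs : IsNE κ ρ h) (hp : IsPat κ ρ Λ) (hl : IsLat Λ)
    (hV : Vrel m (fun v => cnt Λ v h) μ) :
    IsPat (rowsS κ h m (κ (h - 1))) (rowsS ρ h m (κ (h - 1) + 1))
      (glue h m (colG (κ (h - 1)) (exc (fun v => cnt Λ v h) μ)) Λ) ∧
    IsLat (glue h m (colG (κ (h - 1)) (exc (fun v => cnt Λ v h) μ)) Λ) ∧
    ∀ v, cnt (glue h m (colG (κ (h - 1)) (exc (fun v => cnt Λ v h) μ)) Λ) v (h + m) = μ v := by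
  have hS := hs.isShape_S (k := m) (w := 1) (by omega)
  set k := exc (fun v => cnt Λ v h) μ with hk
  set b := κ (h - 1) with hb
  have hk1 : ∀ v, k (v + 1) = k v + (μ v - cnt Λ v h) := exc_succ _ _
  have hle := hV.le
  have hle1 := hV.le_succ
  have hanti := hV.anti
  have hkm := hV.exc_le
  have hkmono : ∀ v, k v ≤ k (v + 1) := fun v => exc_mono _ _ (Nat.le_succ v)
  have hpat : IsPat (rowsS κ h m b) (rowsS ρ h m (b + 1)) (glue h m (colG b k) Λ) := by
    apply hs.isPat_glue hp
    · intro i _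
      simp [colG, hk, exc_zero, hb]
    · intro v i _
      unfold colG
      have := hkmono v
      split_ifs <;> omega
    · intro v i _
      unfold colG
      have := hk1 v
      have := hle1 v
      split_ifs <;> omega
    · intro v _
      unfold colG
      have : b ≤ Λ v (h - 1) := hp.bot_le _ _
      split_ifs <;> omega
    · obtain ⟨N, hN⟩ := hV.size
      refine ⟨N, fun v hv i hi => ?_⟩
      rw [colG, hk, hN v hv, if_pos hi]
  have hcnt : ∀ v, ∀ i ≤ m, cnt (glue h m (colG b k) Λ) v (h + i) + min i (k v) =
      cnt Λ v h + min i (k (v + 1)) := by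
    intro v i hi
    rw [cnt_glue_add v hi, add_assoc, sum_colG b (hkmono v)]
  have hfull : ∀ v, cnt (glue h m (colG b k) Λ) v (h + m) = μ v := by
    intro v
    have h1 := hcnt v m le_rfl
    have h2 := hkm v
    have h3 := hkm (v + 1)
    have h4 := hk1 v
    have h5 := hle v
    rw [← hk] at h2 h3
    omega
  refine ⟨hpat, ?_, hfull⟩
  intro v R
  by_cases hR : R < h
  · rw [cnt_glue_le _ (by omega), cnt_glue_le _ (by omega)]
    exact hl v R
  obtain ⟨i, rfl⟩ : ∃ i, R = h + i := ⟨R - h, by omega⟩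
  by_cases hi : i < m
  · have h1 := hcnt (v + 1) (i + 1) hi
    have h2 := hcnt v i hi.le
    have h3 := hk1 v
    have h4 := hk1 (v + 1)
    have h5 := hle v
    have h6 := hle (v + 1)
    have h7 := hle1 v
    have h8 := hle1 (v + 1)
    have h9 := hanti v
    have h10 := hl.cnt_anti v h
    simp only [Nat.add_assoc, Nat.reduceAdd] at *
    omega
  · rw [cnt_stable hS hpat _ (R := h + i + 1) (by omega), cnt_stable hS hpat _ (R := h + i)
      (by omega), hfull, hfull]
    exact hanti v

open Classical in
/-- Littlewood–Richardson numbers of `S(1^m, E; 1)`: they are governed by vertical strips alone. -/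
theorem lrCount_col (hs : IsNE κ ρ h) (hm : 0 < m) (d : ℕ →₀ ℕ) :
    lrCount (SDiagG (colD m) (shapeCells κ ρ h) 1) d =
      #{Λ ∈ lats hs.toIsShape | Vrel m (fun v => cnt Λ v h) d} := by
  have hS := hs.isShape_S (k := m) (w := 1) (by omega)
  rw [hs.SDiagG_rect (mem_colD m) hm one_pos, lrCount_eq_lats hS]
  apply card_nbij' (res h)
    (fun Λ => glue h m (colG (κ (h - 1)) (exc (fun v => cnt Λ v h) d)) Λ)
  · intro Λ hΛ
    simp only [coe_filter, mem_lats, Set.mem_ofPred_eq] at hΛ ⊢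
    exact ⟨⟨hΛ.1.1.res hs, hΛ.1.1.res_lat hs hΛ.1.2⟩, (col_key hs hΛ.1.1 hΛ.1.2 hΛ.2).1⟩
  · intro Λ hΛ
    simp only [coe_filter, mem_lats, Set.mem_ofPred_eq] at hΛ ⊢
    have := col_glue hs hΛ.1.1 hΛ.1.2 hΛ.2
    exact ⟨⟨this.1, this.2.1⟩, this.2.2⟩
  · intro Λ hΛ
    simp only [coe_filter, mem_lats, Set.mem_ofPred_eq] at hΛ ⊢
    exact (col_key hs hΛ.1.1 hΛ.1.2 hΛ.2).2.symm
  · intro Λ hΛ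
    simp only [coe_filter, mem_lats, Set.mem_ofPred_eq] at hΛ ⊢
    exact res_glue hs hΛ.1.1 _

/-- A lattice tableau of `S((m), E; 1)` of content `μ` is determined by its restriction to `E`, of
content `ν` say. The lattice condition in the last row makes `μ/ν` a horizontal strip, and since the
second cell of that row lies under the bottom-left cell of `E`, at most one of its entries is `0`. -/
theorem row_key (hs : IsNE κ ρ h) (hm : m ≤ ρ (h - 1) - κ (h - 1) + 1)
    (hp : IsPat (rowsS κ h 1 (κ (h - 1))) (rowsS ρ h 1 (κ (h - 1) + m)) Λ) (hl : IsLat Λ)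
    (hμ : ∀ v, cnt Λ v (h + 1) = μ v) :
    Hrel m (fun v => cnt (res h Λ) v h) μ ∧
      Λ = glue h 1 (fun v _ => κ (h - 1) + exc (fun v => cnt (res h Λ) v h) μ v) (res h Λ) := by
  have hS := hs.isShape_S (k := 1) (w := m) hm
  have hpos := hs.pos
  set b := κ (h - 1) with hb
  have hν : ∀ v, cnt (res h Λ) v h = cnt Λ v h := fun v => hp.cnt_res v le_rfl
  simp only [hν]
  have hbd : ∀ v, b ≤ Λ v h := by
    intro v
    have h1 := hp.bot_le v h
    simpa [rowsS] using h1
  have h0 : Λ 0 h = b := by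
    have h1 := hp.bot h
    simpa [rowsS] using h1
  have hsum : ∀ v, cnt Λ v h + (Λ (v + 1) h - b) = μ v + (Λ v h - b) := by
    intro v
    rw [← hμ v, cnt_succ]
    have := hbd v
    have := hp.mono v h
    omega
  have hexc := exc_eq (ν := fun v => cnt Λ v h) (μ := μ) (x := fun v => Λ v h - b)
    (by simp only [h0, Nat.sub_self]) hsum (fun v => Nat.sub_le_sub_right (hp.mono v h) b)
  constructor
  · constructor
    · intro v; have := hsum v; have := hp.mono v h; omega
    · have h1 := hp.inter 0 (h - 1)
      have h2 := hp.bot (h - 1)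
      rw [Nat.sub_add_cancel hpos] at h1
      have h3 : h - 1 < h := by omega
      simp only [rowsS, h3, if_true] at h2
      have h4 := hsum 0
      simp only [Nat.zero_add] at *
      omega
    · intro v
      rw [← hμ]
      exact hl v h
    · obtain ⟨N, hN⟩ := hp.top
      refine ⟨N, fun n hn => ?_⟩
      rw [hexc]
      have := hN n hn h
      simp only [rowsS] at this
      simp at this
      omega
  · have h1 := eq_glue_res hS hp
    refine h1.trans ?_
    funext v r
    unfold glue
    split_ifs with ha hc
    · rfl
    · simp only [hexc]
      obtain rfl : r = h := by omega
      have := hbd v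
      simp only [Nat.sub_self, Nat.add_zero]
      omega
    · rfl

open Classical in
/-- Upper bound for the Littlewood–Richardson numbers of `S((m), E; 1)`. It can be strict, since
the columns shared with the last row of `E` restrict which strips can be filled in. -/
theorem lrCount_row_le (hs : IsNE κ ρ h) (hm : 0 < m) (hm' : m ≤ ρ (h - 1) - κ (h - 1) + 1)
    (d : ℕ →₀ ℕ) :
    lrCount (SDiagG (rowD m) (shapeCells κ ρ h) 1) d ≤
      #{Λ ∈ lats hs.toIsShape | Hrel m (fun v => cnt Λ v h) d} := by
  have hS := hs.isShape_S (k := 1) (w := m) hm'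
  rw [hs.SDiagG_rect (mem_rowD m) one_pos hm, lrCount_eq_lats hS]
  apply card_le_card_of_injOn (res h)
  · intro Λ hΛ
    simp only [coe_filter, mem_lats, Set.mem_ofPred_eq] at hΛ ⊢
    exact ⟨⟨hΛ.1.1.res hs, hΛ.1.1.res_lat hs hΛ.1.2⟩, (row_key hs hm' hΛ.1.1 hΛ.1.2 hΛ.2).1⟩
  · intro Λ hΛ Λ' hΛ' he
    simp only [coe_filter, mem_lats, Set.mem_ofPred_eq] at hΛ hΛ'
    rw [(row_key hs hm' hΛ.1.1 hΛ.1.2 hΛ.2).2, (row_key hs hm' hΛ'.1.1 hΛ'.1.2 hΛ'.2).2, he]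

end Pieri

/-! ### The last row of a lattice tableau -/

section Rot
variable {κ ρ : ℕ → ℕ} {h m n : ℕ} {Λ : ℕ → ℕ → ℕ} {f μ : ℕ → ℕ}

/-- The number of entries `≥ v` in the rows `< R`. -/
def rem (ρ : ℕ → ℕ) (Λ : ℕ → ℕ → ℕ) (v R : ℕ) : ℕ := ∑ i ∈ range R, (ρ i - Λ v i)

theorem rem_eq (hp : IsPat κ ρ Λ) (v R : ℕ) : rem ρ Λ v R = cnt Λ v R + rem ρ Λ (v + 1) R := by
  rw [rem, cnt, rem, ← sum_add_distrib]
  apply sum_congr rfl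
  intro i _
  have := hp.mono v i
  have := hp.le_top (v + 1) i
  omega

/-- The lattice inequalities summed over all values `≥ v`. -/
theorem IsLat.rem_le (hp : IsPat κ ρ Λ) (hl : IsLat Λ) (v R : ℕ) :
    rem ρ Λ (v + 1) (R + 1) ≤ rem ρ Λ v R := by
  obtain ⟨N, hN⟩ := hp.top
  have key : ∀ k v, N ≤ v + k → rem ρ Λ (v + 1) (R + 1) ≤ rem ρ Λ v R := by
    intro k
    induction k with
    | zero =>
      intro v hv
      have : rem ρ Λ (v + 1) (R + 1) = 0 :=
        sum_eq_zero fun i _ => by rw [hN (v + 1) (by omega), Nat.sub_self]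
      omega
    | succ k ih =>
      intro v hv
      rw [rem_eq hp (v + 1), rem_eq hp v]
      exact add_le_add (hl v R) (ih (v + 1) (by omega))
  exact key N v (by omega)

/-- The first part of the content of a lattice tableau is at least the length of the last row: the
entries `≥ 1` are at most as many as the cells above the last row. -/
theorem IsNE.lastRow_le (hs : IsNE κ ρ h) (hp : IsPat κ ρ Λ) (hl : IsLat Λ) :
    ρ (h - 1) - κ (h - 1) ≤ cnt Λ 0 h := by
  have hpos := hs.pos
  have h1 := hl.rem_le hp 0 (h - 1)
  have h2 := rem_eq hp 0 h
  have h3 : rem ρ Λ 0 (h - 1 + 1) = rem ρ Λ 0 (h - 1) + (ρ (h - 1) - Λ 0 (h - 1)) :=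
    sum_range_succ _ _
  rw [hp.bot] at h3
  simp only [Nat.sub_add_cancel hpos, Nat.zero_add] at *
  omega

/-! ### Rotated fat staircases -/

/-- `f` lists the row lengths of a fat staircase with `h` nonempty rows: consecutive lengths
differ by at most one. -/
structure IsFat (f : ℕ → ℕ) (h : ℕ) : Prop where
  anti : ∀ r, f (r + 1) ≤ f r
  step : ∀ r, f r ≤ f (r + 1) + 1
  pos_iff : ∀ r, 0 < f r ↔ r < h

/-- Inner boundary of the rotated staircase: row `r` is right-justified of length `f (h - 1 - r)`. -/
def rotIn (f : ℕ → ℕ) (h r : ℕ) : ℕ := if r < h then f 0 - f (h - 1 - r) else 0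

/-- Outer boundary of the rotated staircase: all rows end in column `f 0`. -/
def rotOut (f : ℕ → ℕ) (h r : ℕ) : ℕ := if r < h then f 0 else 0

/-- The pattern of the unique lattice tableau of the rotated staircase. Row `r`
of level `v` is row `r - v` of `rotIn`, and equals `f 0` when `r < v`. -/
def rotPat (f : ℕ → ℕ) (h v r : ℕ) : ℕ := if r < h then f 0 - f (h - 1 - r + v) else 0

theorem IsFat.antitone (hf : IsFat f h) : Antitone f := antitone_nat_of_succ_le hf.anti

theorem IsFat.isNE (hf : IsFat f h) (hh : 0 < h) : IsNE (rotIn f h) (rotOut f h) h where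
  antiInner r := by
    have := hf.antitone (show h - 1 - (r + 1) ≤ h - 1 - r by omega)
    unfold rotIn
    split_ifs <;> omega
  antiOuter r := by unfold rotOut; split_ifs <;> omega
  le r := by unfold rotIn rotOut; split_ifs <;> omega
  zero r hr := by rw [rotOut, if_neg (by omega)]
  pos := hh
  last := by
    have := (hf.pos_iff 0).2 hh
    have e : h - 1 < h := by omega
    simp only [rotIn, rotOut, e, if_true, Nat.sub_self]
    exact this

theorem IsFat.eq_zero (hf : IsFat f h) {r : ℕ} (hr : h ≤ r) : f r = 0 := by
  have := (hf.pos_iff r).not.2 (by omega)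
  omega

theorem IsFat.isPat (hf : IsFat f h) : IsPat (rotIn f h) (rotOut f h) (rotPat f h) where
  bot r := rfl
  mono v r := by
    have := hf.antitone (show h - 1 - r + v ≤ h - 1 - r + (v + 1) by omega)
    unfold rotPat
    split_ifs <;> omega
  inter v r := by
    unfold rotPat
    split_ifs with h1 h2
    · rw [show h - 1 - (r + 1) + (v + 1) = h - 1 - r + v by omega]
    · omega
    · omega
    · omega
  top := ⟨h, fun v hv r => by
    unfold rotPat rotOut
    rw [hf.eq_zero (show h ≤ h - 1 - r + v by omega), Nat.sub_zero]⟩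

theorem IsFat.cnt (hf : IsFat f h) (v R : ℕ) : cnt (rotPat f h) v R = f (h - R + v) := by
  induction R with
  | zero => rw [hf.eq_zero (by omega)]; rfl
  | succ R ih =>
    rw [cnt_succ, ih]
    unfold rotPat
    split_ifs with hR
    · have h1 := hf.antitone (show 0 ≤ h - R + v by omega)
      have h2 := hf.antitone (show 0 ≤ h - (R + 1) + v by omega)
      have h3 := hf.antitone (show h - (R + 1) + v ≤ h - R + v by omega)
      rw [show h - 1 - R + (v + 1) = h - R + v by omega, show h - 1 - R + v = h - (R + 1) + v by omega]
      omega
    · rw [show h - (R + 1) + v = h - R + v by omega]; omega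

theorem IsFat.isLat (hf : IsFat f h) : IsLat (rotPat f h) := by
  intro v R
  rw [hf.cnt, hf.cnt]
  exact hf.antitone (by omega)

/-- The rotated staircase has only one lattice tableau. All its rows end in the same column, so by
interlacing there are at least as many entries `≥ v + 1` as entries `≥ v` above the last row, while
`IsLat.rem_le` gives the opposite inequality; hence all interlacing inequalities are equalities. -/
theorem IsFat.unique (hf : IsFat f h) (hh : 0 < h) (hp : IsPat (rotIn f h) (rotOut f h) Λ)
    (hl : IsLat Λ) : Λ = rotPat f h := by
  have hs := hf.isNE hh
  have key : ∀ v, Λ (v + 1) 0 = f 0 ∧ ∀ r, r + 1 < h → Λ (v + 1) (r + 1) = Λ v r := by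
    intro v
    have h1 := hl.rem_le hp v (h - 1)
    rw [rem, rem, sum_range_succ'] at h1
    have h2 : ∀ i ∈ range (h - 1), rotOut f h i - Λ v i ≤
        rotOut f h (i + 1) - Λ (v + 1) (i + 1) := by
      intro i hi
      rw [mem_range] at hi
      have := hp.inter v i
      simp only [rotOut]
      rw [if_pos (by omega), if_pos (by omega)]
      omega
    have h3 := sum_le_sum h2
    have h4 : rotOut f h 0 = f 0 := if_pos hh
    have h5 := hp.le_top (v + 1) 0
    refine ⟨by omega, fun r hr => ?_⟩
    have h6 := (sum_eq_sum_iff_of_le h2).1 (by omega) r (mem_range.2 (by omega))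
    have h7 := hp.le_top (v + 1) (r + 1)
    have h8 := hp.le_top v r
    simp only [rotOut] at h6 h7 h8
    rw [if_pos hr] at h6 h7
    rw [if_pos (by omega)] at h6 h8
    omega
  funext v
  induction v with
  | zero => funext r; exact hp.bot r
  | succ v ih =>
    funext r
    by_cases hr : r < h
    · cases r with
      | zero =>
        rw [(key v).1, rotPat, if_pos hh, hf.eq_zero (show h ≤ h - 1 - 0 + (v + 1) by omega),
          Nat.sub_zero]
      | succ r =>
        rw [(key v).2 r hr, ih, rotPat, rotPat, if_pos hr, if_pos (by omega)]
        congr 2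
        omega
    · rw [hp.eq_zero hs.toIsShape _ (not_lt.1 hr), rotPat, if_neg hr]

theorem IsFat.lats_eq (hf : IsFat f h) (hh : 0 < h) :
    lats (hf.isNE hh).toIsShape = {rotPat f h} := by
  ext Λ
  rw [mem_lats, mem_singleton]
  constructor
  · exact fun hΛ => hf.unique hh hΛ.1 hΛ.2
  · rintro rfl; exact ⟨hf.isPat, hf.isLat⟩

theorem IsFat.ct (hf : IsFat f h) : (fun v => _root_.cnt (rotPat f h) v h) = f := by
  funext v
  rw [hf.cnt, Nat.sub_self, Nat.zero_add]

open Classical in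
/-- The Schur expansion of `S(1^m, E; 1)` is multiplicity free for a rotated staircase `E`. -/
theorem IsFat.lrCount_col (hf : IsFat f h) (hh : 0 < h) (hm : 0 < m) (d : ℕ →₀ ℕ) :
    lrCount (SDiagG (colD m) (shapeCells (rotIn f h) (rotOut f h) h) 1) d =
      if Vrel m f d then 1 else 0 := by
  rw [_root_.lrCount_col (hf.isNE hh) hm, hf.lats_eq hh, filter_singleton, hf.ct]
  split_ifs <;> rfl

/-- Extension of a lattice pattern of `E` to `S((m), E; 1)` along a strip satisfying `Hrel`, under
the column-strictness condition `hle` at the last row of `E`. -/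
theorem row_glue (hs : IsNE κ ρ h) (hm : m ≤ ρ (h - 1) - κ (h - 1) + 1)
    (hp : IsPat κ ρ Λ) (hl : IsLat Λ) (hH : Hrel m (fun v => cnt Λ v h) μ)
    (hle : ∀ v, κ (h - 1) + exc (fun v => cnt Λ v h) μ (v + 1) ≤ Λ v (h - 1) + 1) :
    IsPat (rowsS κ h 1 (κ (h - 1))) (rowsS ρ h 1 (κ (h - 1) + m))
      (glue h 1 (fun v _ => κ (h - 1) + exc (fun v => cnt Λ v h) μ v) Λ) ∧
    IsLat (glue h 1 (fun v _ => κ (h - 1) + exc (fun v => cnt Λ v h) μ v) Λ) ∧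
    ∀ v, cnt (glue h 1 (fun v _ => κ (h - 1) + exc (fun v => cnt Λ v h) μ v) Λ) v (h + 1)
      = μ v := by
  have hS := hs.isShape_S (k := 1) (w := m) hm
  have hpat : IsPat (rowsS κ h 1 (κ (h - 1))) (rowsS ρ h 1 (κ (h - 1) + m))
      (glue h 1 (fun v _ => κ (h - 1) + exc (fun v => cnt Λ v h) μ v) Λ) := by
    apply hs.isPat_glue hp
    · intro i _; simp [exc_zero]
    · intro v i _
      exact Nat.add_le_add_left (exc_mono _ _ (Nat.le_succ v)) _
    · intro v i hi; omega
    · intro v _; exact hle v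
    · obtain ⟨N, hN⟩ := hH.size
      exact ⟨N, fun v hv i _ => by rw [hN v hv]⟩
  have hfull : ∀ v, cnt (glue h 1 (fun v _ => κ (h - 1) + exc (fun v => cnt Λ v h) μ v) Λ) v
      (h + 1) = μ v := by
    intro v
    rw [cnt_glue_add v le_rfl, sum_range_one, exc_succ]
    have := hH.le v
    omega
  refine ⟨hpat, ?_, hfull⟩
  intro v R
  rcases lt_trichotomy R h with hR | rfl | hR
  · rw [cnt_glue_le _ (by omega), cnt_glue_le _ (by omega)]
    exact hl v R
  · rw [hfull, cnt_glue_le _ le_rfl]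
    exact hH.inter v
  · rw [cnt_stable hS hpat _ (R := R + 1) (by omega), cnt_stable hS hpat _ (R := R)
      (by omega), hfull, hfull]
    exact (hH.inter v).trans (hH.le v)

/-- For horizontal strips over a staircase content the column-strictness condition of `row_glue`
holds automatically: `μ/f` has at most one cell in row `0`, and row `v + 1` has at most
`f v - f (v + 1)` cells. -/
theorem Hrel.exc_le (hH : Hrel m f μ) (v : ℕ) :
    exc f μ (v + 1) + f v ≤ 1 + f 0 := by
  induction v with
  | zero =>
    rw [exc_succ, exc_zero]
    have := hH.zero
    omega
  | succ v ih =>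
    rw [exc_succ]
    have := hH.inter v
    have := hH.le (v + 1)
    omega

open Classical in
/-- For a rotated staircase the bound `lrCount_row_le` is attained. -/
theorem IsFat.lrCount_row (hf : IsFat f h) (hh : 0 < h) (hm : 0 < m) (hm' : m ≤ f 0 + 1)
    (d : ℕ →₀ ℕ) :
    lrCount (SDiagG (rowD m) (shapeCells (rotIn f h) (rotOut f h) h) 1) d =
      if Hrel m f d then 1 else 0 := by
  have hs := hf.isNE hh
  have e : h - 1 < h := by omega
  have hin : rotIn f h (h - 1) = 0 := by
    rw [rotIn, if_pos e, Nat.sub_self, Nat.sub_self]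
  have hout : rotOut f h (h - 1) = f 0 := if_pos e
  have hmm : m ≤ rotOut f h (h - 1) - rotIn f h (h - 1) + 1 := by omega
  apply le_antisymm
  · refine (lrCount_row_le hs hm hmm d).trans (le_of_eq ?_)
    rw [hf.lats_eq hh, filter_singleton, hf.ct]
    split_ifs <;> rfl
  · split_ifs with hH
    · have hS := hs.isShape_S (k := 1) (w := m) hmm
      rw [hs.SDiagG_rect (mem_rowD m) one_pos hm, lrCount_eq_lats hS, Nat.one_le_iff_ne_zero,
        card_ne_zero]
      have hct := hf.ct
      have := row_glue hs hmm hf.isPat hf.isLat (μ := d) (by rw [hct]; exact hH) (by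
        intro v
        rw [hct, hin]
        have h1 := hH.exc_le v
        simp only [rotPat]
        rw [if_pos e, Nat.sub_self, Nat.zero_add, Nat.zero_add]
        have h2 := hf.antitone (Nat.zero_le v)
        omega)
      exact ⟨_, mem_filter.2 ⟨(mem_lats hS).2 ⟨this.1, this.2.1⟩, this.2.2⟩⟩
    · exact Nat.zero_le _

end Rot

/-! ### Row lengths of fat staircases -/

section Fat

/-- `staircaseRows` with the list of multiplicities replaced by a function and a length, for
induction on the length. -/
def stairAux (a : ℕ → ℕ) (n : ℕ) : List ℕ :=
  ((List.range n).reverse.map (fun i => List.replicate (a i) (i + 1))).flatten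

theorem stairAux_succ (a : ℕ → ℕ) (n : ℕ) :
    stairAux a (n + 1) = List.replicate (a n) (n + 1) ++ stairAux a n := by
  simp [stairAux, List.range_succ]

theorem stairAux_fat {a : ℕ → ℕ} {n : ℕ} (ha : ∀ i < n, 0 < a i) :
    IsFat (fun r => (stairAux a n).getD r 0) (stairAux a n).length ∧
      (stairAux a n).getD 0 0 = n := by
  induction n with
  | zero =>
    refine ⟨⟨?_, ?_, ?_⟩, ?_⟩ <;> simp [stairAux]
  | succ n ih =>
    obtain ⟨h1, h2⟩ := ih fun i hi => ha i (by omega)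
    have hlt : ∀ r, r < a n → (stairAux a (n + 1)).getD r 0 = n + 1 := by
      intro r hr
      rw [stairAux_succ, List.getD_append _ _ _ _ (by simpa using hr)]
      simp [List.getD_eq_getElem?_getD, hr]
    have hge : ∀ r, a n ≤ r → (stairAux a (n + 1)).getD r 0 = (stairAux a n).getD (r - a n) 0 := by
      intro r hr
      rw [stairAux_succ, List.getD_append_right _ _ _ _ (by simpa using hr)]
      simp
    have hcase : ∀ r, (stairAux a (n + 1)).getD (r + 1) 0 ≤ (stairAux a (n + 1)).getD r 0 ∧
        (stairAux a (n + 1)).getD r 0 ≤ (stairAux a (n + 1)).getD (r + 1) 0 + 1 := by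
      intro r
      rcases lt_trichotomy (r + 1) (a n) with h | h | h
      · rw [hlt r (by omega), hlt (r + 1) h]; omega
      · rw [hlt r (by omega), hge (r + 1) h.ge, h, Nat.sub_self, h2]; omega
      · rw [hge r (by omega), hge (r + 1) h.le, show r + 1 - a n = r - a n + 1 by omega]
        exact ⟨h1.anti _, h1.step _⟩
    refine ⟨⟨fun r => (hcase r).1, fun r => (hcase r).2, fun r => ?_⟩, hlt 0 (ha n (by omega))⟩
    have hlen : (stairAux a (n + 1)).length = a n + (stairAux a n).length := by
      simp [stairAux_succ]
    rw [hlen]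
    by_cases hr : r < a n
    · simp only [hlt r hr]; omega
    · have := h1.pos_iff (r - a n)
      simp only [hge r (not_lt.1 hr)]
      omega

theorem count_stairAux (a : ℕ → ℕ) (n i : ℕ) :
    (stairAux a n).count (i + 1) = if i < n then a i else 0 := by
  induction n with
  | zero => simp [stairAux]
  | succ n ih =>
    rw [stairAux_succ, List.count_append, ih, List.count_replicate]
    by_cases h : n = i
    · subst h; simp
    · have : ¬ (n + 1 == i + 1) := by simpa using h
      rw [if_neg this]
      split_ifs <;> omega

variable {α β : List ℕ}

/-- The length of row `r` of the fat staircase `δ_α`, and `0` below the last row. -/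
def stairF (α : List ℕ) (r : ℕ) : ℕ := (staircaseRows α).getD r 0

theorem staircaseRows_eq (α : List ℕ) :
    staircaseRows α = stairAux (fun i => α.getD i 0) α.length := rfl

theorem getD_pos (hα : ∀ a ∈ α, 0 < a) : ∀ i < α.length, 0 < α.getD i 0 := by
  intro i hi
  rw [List.getD_eq_getElem _ _ hi]
  exact hα _ (List.getElem_mem hi)

theorem stairF_fat (hα : ∀ a ∈ α, 0 < a) : IsFat (stairF α) (staircaseRows α).length :=
  (stairAux_fat (getD_pos hα)).1

theorem stairF_zero (hα : ∀ a ∈ α, 0 < a) : stairF α 0 = α.length :=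
  (stairAux_fat (getD_pos hα)).2

theorem staircaseRows_pos (hα : ∀ a ∈ α, 0 < a) (h : α ≠ []) : 0 < (staircaseRows α).length := by
  rw [← (stairF_fat hα).pos_iff, stairF_zero hα]
  exact List.length_pos_iff.2 h

theorem fatStaircase_eq (α : List ℕ) :
    fatStaircase α = shapeCells (fun _ => 0) (stairF α) (staircaseRows α).length := by
  ext ⟨i, j⟩
  rw [mem_shapeCells, fatStaircase, diagramOfRows]
  simp [stairF]

theorem rowContent_fat (hα : ∀ a ∈ α, 0 < a) (r : ℕ) :
    rowContent (fatStaircase α) r = stairF α r := by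
  have : rowContent (fatStaircase α) r = #{c ∈ fatStaircase α | c.1 = r} := by
    rw [rowContent, Finsupp.finsetSum_apply, card_filter]
    simp only [Finsupp.single_apply]
  rw [this, fatStaircase_eq, card_filter_shapeCells]
  have h1 : ∀ i ∈ range (staircaseRows α).length,
      #{j ∈ Ico 0 (stairF α i) | (i, j).1 = r} = if i = r then stairF α r else 0 := by
    intro i _
    split_ifs with h
    · subst h; simp
    · simp [h]
  rw [sum_congr rfl h1, sum_ite_eq']
  split_ifs with h
  · rfl
  · rw [(stairF_fat hα).eq_zero]
    simpa using h

/-- The multiplicities `α` (assumed positive) are recovered from the partition `δ_α`. -/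
theorem stair_injective (hα : ∀ a ∈ α, 0 < a) (hβ : ∀ a ∈ β, 0 < a)
    (he : rowContent (fatStaircase α) = rowContent (fatStaircase β)) : α = β := by
  have hf : ∀ r, stairF α r = stairF β r := fun r => by
    rw [← rowContent_fat hα, ← rowContent_fat hβ, he]
  have hlen : α.length = β.length := by rw [← stairF_zero hα, ← stairF_zero hβ, hf]
  have hrows : staircaseRows α = staircaseRows β := by
    have hl : (staircaseRows α).length = (staircaseRows β).length := by
      have h1 := (stairF_fat hα).pos_iff
      have h2 := (stairF_fat hβ).pos_iff
      simp only [hf] at h1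
      have h3 : ∀ r, r < (staircaseRows α).length ↔ r < (staircaseRows β).length :=
        fun r => (h1 r).symm.trans (h2 r)
      have a := h3 (staircaseRows α).length
      have b := h3 (staircaseRows β).length
      omega
    apply List.ext_getElem hl
    intro i h1 h2
    have := hf i
    rwa [stairF, stairF, List.getD_eq_getElem _ _ h1, List.getD_eq_getElem _ _ h2] at this
  apply List.ext_getElem hlen
  intro i h1 h2
  have h3 := congrArg (List.count (i + 1)) hrows
  rw [staircaseRows_eq, staircaseRows_eq, count_stairAux, count_stairAux, if_pos h1, if_pos h2,
    List.getD_eq_getElem _ _ h1, List.getD_eq_getElem _ _ h2] at h3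
  exact h3

theorem rotD_fat (hα : ∀ a ∈ α, 0 < a) (hne : α ≠ []) :
    rotD (fatStaircase α) = shapeCells (rotIn (stairF α) (staircaseRows α).length)
      (rotOut (stairF α) (staircaseRows α).length) (staircaseRows α).length := by
  have hf := stairF_fat hα
  have hh := staircaseRows_pos hα hne
  set h := (staircaseRows α).length
  set f := stairF α
  have hht : ht (fatStaircase α) = h := by
    rw [fatStaircase_eq]
    apply IsNE.ht
    exact ⟨⟨fun _ => le_rfl, hf.anti, fun _ => Nat.zero_le _, fun r hr => hf.eq_zero hr⟩, hh,
      (hf.pos_iff _).2 (by omega)⟩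
  have hwd : wd (fatStaircase α) = f 0 := by
    rw [fatStaircase_eq]
    apply le_antisymm
    · apply Finset.sup_le
      rintro ⟨i, j⟩ hc
      have h1 : j < f i := ((mem_shapeCells i j).1 hc).2.2
      exact h1.trans_le (hf.antitone (Nat.zero_le i))
    · have h0 := (hf.pos_iff 0).2 hh
      have hm : (0, f 0 - 1) ∈ shapeCells (fun _ => 0) f h :=
        (mem_shapeCells _ _).2 ⟨hh, Nat.zero_le _, by omega⟩
      have := le_sup (f := fun c : ℕ × ℕ => c.2 + 1) hm
      simp only [Nat.sub_add_cancel h0] at this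
      exact this
  rw [rotD, hht, hwd, fatStaircase_eq]
  ext ⟨i, j⟩
  simp only [mem_image, Prod.exists, mem_shapeCells, Prod.mk.injEq]
  constructor
  · rintro ⟨a, b, ⟨h1, -, h2⟩, rfl, rfl⟩
    have e : h - 1 - a < h := by omega
    have := hf.antitone (Nat.zero_le a)
    change b < f a at h2
    rw [rotIn, rotOut, if_pos e, if_pos e, show h - 1 - (h - 1 - a) = a by omega]
    omega
  · rintro ⟨h1, h2, h3⟩
    have := hf.antitone (Nat.zero_le (h - 1 - i))
    rw [rotIn, if_pos h1] at h2
    rw [rotOut, if_pos h1] at h3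
    exact ⟨h - 1 - i, f 0 - 1 - j, ⟨by omega, Nat.zero_le _, by change _ < f _; omega⟩, by omega,
      by omega⟩

end Fat

/-! ### Skew diagrams of Young diagrams -/

section Skew

/-- A nonempty skew diagram `ρ/κ` is a shape of the form `IsNE`: rows below its last nonempty row
are discarded, and the inner boundary is truncated accordingly. -/
theorem skew_isNE (ρ κ : YoungDiagram) (hsub : κ ≤ ρ) (hne : (ρ.cells \ κ.cells).Nonempty) :
    ∃ κ' ρ' h, IsNE κ' ρ' h ∧ ρ.cells \ κ.cells = shapeCells κ' ρ' h := by
  set D := ρ.cells \ κ.cells with hD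
  have hmem : ∀ i j, (i, j) ∈ D ↔ κ.rowLen i ≤ j ∧ j < ρ.rowLen i := by
    intro i j
    rw [hD, mem_sdiff, YoungDiagram.mem_cells, YoungDiagram.mem_cells, YoungDiagram.mem_iff_lt_rowLen,
      YoungDiagram.mem_iff_lt_rowLen]
    omega
  have hle : ∀ i, κ.rowLen i ≤ ρ.rowLen i := by
    intro i
    by_contra hc
    have h1 : (i, ρ.rowLen i) ∈ κ := YoungDiagram.mem_iff_lt_rowLen.2 (not_le.1 hc)
    have h2 := YoungDiagram.mem_iff_lt_rowLen.1 (hsub h1)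
    omega
  have hlt : ∀ i j, (i, j) ∈ D → i < ht D := fun i j hc =>
    le_sup (f := fun c : ℕ × ℕ => c.1 + 1) hc
  obtain ⟨⟨i, j⟩, hc, hmax⟩ := exists_mem_eq_sup D hne (fun c : ℕ × ℕ => c.1 + 1)
  have hi : ht D = i + 1 := hmax
  refine ⟨fun r => if r < ht D then κ.rowLen r else 0, fun r => if r < ht D then ρ.rowLen r else 0,
    ht D, ⟨⟨?_, ?_, ?_, ?_⟩, ?_, ?_⟩, ?_⟩
  · intro r
    have := κ.rowLen_anti r (r + 1) (Nat.le_succ r)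
    split_ifs <;> omega
  · intro r
    have := ρ.rowLen_anti r (r + 1) (Nat.le_succ r)
    split_ifs <;> omega
  · intro r
    have := hle r
    split_ifs <;> omega
  · intro r hr
    exact if_neg (not_lt.2 hr)
  · omega
  · have := (hmem i j).1 hc
    rw [hi, Nat.add_sub_cancel]
    simp only [Nat.lt_succ_self, if_true]
    omega
  · ext ⟨a, b⟩
    rw [mem_shapeCells, hmem]
    constructor
    · intro hab
      have := hlt a b ((hmem a b).2 hab)
      simp only [this, if_true, true_and]
      exact hab
    · rintro ⟨h1, h2, h3⟩
      simp only [h1, if_true] at h2 h3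
      exact ⟨h2, h3⟩

end Skew

/-! ### Comparison of the expansions -/

section Assembly
variable {κ ρ : ℕ → ℕ} {h m : ℕ} {Λ : ℕ → ℕ → ℕ}

theorem colD_one : colD 1 = rowD 1 := rfl

theorem schurPositive_zero : SchurPositive 0 := ⟨∅, fun _ => 0, by simp, by simp⟩

/-- When all contents of lattice tableaux of `ρ/κ` are fat staircases, a count of lattice tableaux
by a property of their content is a sum over staircases weighted by Littlewood–Richardson
coefficients. -/
theorem exists_stairs (hs : IsShape κ ρ h) (hfat : IsSumOfFatStaircases (shapeCells κ ρ h)) :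
    ∃ A : Finset (List ℕ),
      (∀ α, α ∈ A ↔ (∀ a ∈ α, 0 < a) ∧
        lrCount (shapeCells κ ρ h) (rowContent (fatStaircase α)) ≠ 0) ∧
      ∀ (Q : (ℕ → ℕ) → Prop) [DecidablePred Q],
        #{Λ ∈ lats hs | Q (fun v => cnt Λ v h)} =
          ∑ α ∈ A, lrCount (shapeCells κ ρ h) (rowContent (fatStaircase α)) *
            if Q (stairF α) then 1 else 0 := by
  classical
  have hfin : {α : List ℕ | (∀ a ∈ α, 0 < a) ∧
      lrCount (shapeCells κ ρ h) (rowContent (fatStaircase α)) ≠ 0}.Finite := by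
    apply Set.Finite.of_finite_image (f := fun α => rowContent (fatStaircase α))
    · apply (lrSupp hs).finite_toSet.subset
      rintro _ ⟨α, hα, rfl⟩
      exact mem_lrSupp hs hα.2
    · intro α hα β hβ he
      exact stair_injective hα.1 hβ.1 he
  refine ⟨hfin.toFinset, fun α => hfin.mem_toFinset, ?_⟩
  intro Q _
  have hinj : Set.InjOn (fun α => rowContent (fatStaircase α)) (hfin.toFinset : Set (List ℕ)) := by
    intro α hα β hβ he
    exact stair_injective (hfin.mem_toFinset.1 hα).1 (hfin.mem_toFinset.1 hβ).1 he
  rw [card_eq_sum_card_fiberwise (f := ctF h)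
    (t := hfin.toFinset.image fun α => rowContent (fatStaircase α)), sum_image hinj]
  · apply sum_congr rfl
    intro α hα
    have hpos := (hfin.mem_toFinset.1 hα).1
    rw [lrCount_eq_lats hs, mul_ite, mul_one, mul_zero]
    have key : ∀ Λ ∈ lats hs, ((∀ v, cnt Λ v h = rowContent (fatStaircase α) v) ↔
        (fun v => cnt Λ v h) = stairF α) := by
      intro Λ _
      rw [funext_iff]
      simp only [rowContent_fat hpos]
    rw [filter_filter]
    split_ifs with hQ
    · congr 1
      apply filter_congr
      intro Λ hΛ
      rw [ctF_eq_iff ((mem_lats hs).1 hΛ).2, key Λ hΛ]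
      constructor
      · exact fun h => h.2
      · intro h; exact ⟨by rw [h]; exact hQ, h⟩
    · rw [card_eq_zero, filter_eq_empty_iff]
      rintro Λ hΛ ⟨h1, h2⟩
      rw [ctF_eq_iff ((mem_lats hs).1 hΛ).2, key Λ hΛ] at h2
      rw [h2] at h1
      exact hQ h1
  · intro Λ hΛ
    rw [mem_coe, mem_filter] at hΛ
    have hne : lrCount (shapeCells κ ρ h) (ctF h Λ) ≠ 0 := by
      rw [lrCount_eq_lats hs, card_ne_zero]
      exact ⟨Λ, mem_filter.2 ⟨hΛ.1, (ctF_eq_iff ((mem_lats hs).1 hΛ.1).2 h _).1 rfl⟩⟩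
    obtain ⟨α, hα, he⟩ := hfat _ hne
    exact mem_coe.2 (mem_image.2 ⟨α, hfin.mem_toFinset.2 ⟨hα, he ▸ hne⟩, he.symm⟩)

/-- The Schur expansion of `S(F, E; 1)` for a `k × w` rectangle `F`, over any sufficiently large
finite index set. -/
theorem exists_schur (hs : IsNE κ ρ h) {F : Diagram} {k w : ℕ}
    (hF : ∀ i j, (i, j) ∈ F ↔ i < k ∧ j < w) (hk : 0 < k) (hw : 0 < w)
    (hw' : w ≤ ρ (h - 1) - κ (h - 1) + 1) :
    ∃ S₀ : Finset (ℕ →₀ ℕ), (∀ d ∈ S₀, ∀ i, d (i + 1) ≤ d i) ∧ ∀ S, S₀ ⊆ S →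
      schurOf (SDiagG F (shapeCells κ ρ h) 1) =
        ∑ d ∈ S, (lrCount (SDiagG F (shapeCells κ ρ h) 1) d : ℤ) • schurOf (diagramOfF d) := by
  rw [hs.SDiagG_rect hF hk hw]
  have hS := hs.isShape_S (k := k) hw'
  exact ⟨lrSupp hS, fun d hd => lrSupp_anti hS hd, fun S hSS => schurOf_eq_sum hS hSS⟩

/-- The last row of the shape is no longer than the first row of any fat staircase `δ_α` in its
expansion. -/
theorem length_of_lr (hs : IsNE κ ρ h) {α : List ℕ} (hα : ∀ a ∈ α, 0 < a)
    (hne : lrCount (shapeCells κ ρ h) (rowContent (fatStaircase α)) ≠ 0) :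
    ρ (h - 1) - κ (h - 1) ≤ α.length := by
  classical
  rw [lrCount_eq_lats hs.toIsShape, card_ne_zero] at hne
  obtain ⟨Λ, hΛ⟩ := hne
  rw [mem_filter, mem_lats] at hΛ
  rw [← stairF_zero hα, ← rowContent_fat hα, ← hΛ.2 0]
  exact hs.lastRow_le hΛ.1.1 hΛ.1.2

/-- Both positivity claims for a shape `IsNE`, with the sum over staircases restricted to the
finite set of those that occur. -/
theorem main_aux (hs : IsNE κ ρ h) (hfat : IsSumOfFatStaircases (shapeCells κ ρ h))
    (hm : 0 < m) (hm' : m ≤ ρ (h - 1) - κ (h - 1) + 1) :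
    ∃ A : Finset (List ℕ),
      (∀ α, α ∈ A ↔ (∀ a ∈ α, 0 < a) ∧
        lrCount (shapeCells κ ρ h) (rowContent (fatStaircase α)) ≠ 0) ∧
      SchurPositive ((schurOf (SDiagG (colD m) (shapeCells κ ρ h) 1) -
          schurOf (SDiagG (rowD m) (shapeCells κ ρ h) 1)) -
        ∑ α ∈ A, lrCount (shapeCells κ ρ h) (rowContent (fatStaircase α)) •
          (schurOf (SDiagG (colD m) (rotD (fatStaircase α)) 1) -
            schurOf (SDiagG (rowD m) (rotD (fatStaircase α)) 1))) ∧
      SchurPositive (∑ α ∈ A, lrCount (shapeCells κ ρ h) (rowContent (fatStaircase α)) •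
          (schurOf (SDiagG (colD m) (rotD (fatStaircase α)) 1) -
            schurOf (SDiagG (rowD m) (rotD (fatStaircase α)) 1))) := by
  classical
  obtain ⟨A, hA, hcount⟩ := exists_stairs hs.toIsShape hfat
  refine ⟨A, hA, ?_⟩
  have hAlen : ∀ α ∈ A, α ≠ [] ∧ m ≤ stairF α 0 + 1 := by
    intro α hα
    have h1 := (hA α).1 hα
    have h2 := length_of_lr hs h1.1 h1.2
    have h3 := hs.last
    rw [stairF_zero h1.1]
    refine ⟨?_, by omega⟩
    rintro rfl
    simp only [List.length_nil] at h2
    omega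
  set c : List ℕ → ℕ := fun α => lrCount (shapeCells κ ρ h) (rowContent (fatStaircase α)) with hc
  -- a common finite index set for all Schur expansions
  have hrot : ∀ α ∈ A, ∃ S₀ : Finset (ℕ →₀ ℕ), (∀ d ∈ S₀, ∀ i, d (i + 1) ≤ d i) ∧
      ∀ S, S₀ ⊆ S →
        schurOf (SDiagG (colD m) (rotD (fatStaircase α)) 1) -
          schurOf (SDiagG (rowD m) (rotD (fatStaircase α)) 1) =
        ∑ d ∈ S, (((if Vrel m (stairF α) d then 1 else 0 : ℕ) : ℤ) -
          ((if Hrel m (stairF α) d then 1 else 0 : ℕ) : ℤ)) • schurOf (diagramOfF d) := by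
    intro α hα
    have h1 := (hA α).1 hα
    obtain ⟨h2, h3⟩ := hAlen α hα
    have hf := stairF_fat h1.1
    have hh := staircaseRows_pos h1.1 h2
    have hE := hf.isNE hh
    have e : (staircaseRows α).length - 1 < (staircaseRows α).length := by omega
    rw [rotD_fat h1.1 h2]
    obtain ⟨S₁, a₁, b₁⟩ := exists_schur hE (mem_colD m) hm one_pos (by omega)
    obtain ⟨S₂, a₂, b₂⟩ := exists_schur hE (mem_rowD m) one_pos hm (by
      rw [rotIn, rotOut, if_pos e, if_pos e, Nat.sub_self, Nat.sub_self]; exact h3)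
    refine ⟨S₁ ∪ S₂, fun d hd => (mem_union.1 hd).elim (a₁ d) (a₂ d), fun S hS => ?_⟩
    rw [b₁ S (subset_union_left.trans hS), b₂ S (subset_union_right.trans hS),
      ← sum_sub_distrib]
    apply sum_congr rfl
    intro d _
    rw [hf.lrCount_col hh hm, hf.lrCount_row hh hm h3, sub_smul]
  choose! T hT1 hT2 using hrot
  obtain ⟨S₁, a₁, b₁⟩ := exists_schur hs (mem_colD m) hm one_pos (by omega)
  obtain ⟨S₂, a₂, b₂⟩ := exists_schur hs (mem_rowD m) one_pos hm hm'
  set S := (S₁ ∪ S₂) ∪ A.biUnion T with hSdef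
  have hS : ∀ d ∈ S, ∀ i, d (i + 1) ≤ d i := by
    intro d hd
    rw [hSdef, mem_union, mem_union, mem_biUnion] at hd
    rcases hd with (hd | hd) | ⟨α, hα, hd⟩
    · exact a₁ d hd
    · exact a₂ d hd
    · exact hT1 α hα d hd
  have hsum : ∑ α ∈ A, c α • (schurOf (SDiagG (colD m) (rotD (fatStaircase α)) 1) -
      schurOf (SDiagG (rowD m) (rotD (fatStaircase α)) 1)) =
      ∑ d ∈ S, (∑ α ∈ A, (c α : ℤ) * (((if Vrel m (stairF α) d then 1 else 0 : ℕ) : ℤ) -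
          ((if Hrel m (stairF α) d then 1 else 0 : ℕ) : ℤ))) • schurOf (diagramOfF d) := by
    simp only [sum_smul]
    rw [sum_comm]
    apply sum_congr rfl
    intro α hα
    rw [hT2 α hα S ((subset_biUnion_of_mem T hα).trans subset_union_right), smul_sum]
    apply sum_congr rfl
    intro d _
    rw [mul_smul, natCast_zsmul]
  have hVH : ∀ α ∈ A, ∀ d : ℕ →₀ ℕ, Hrel m (stairF α) d → Vrel m (stairF α) d := fun α hα d hH =>
    hH.vrel (stairF_fat ((hA α).1 hα).1).step
  rw [hsum]
  constructor
  · rw [b₁ S (subset_union_left.trans subset_union_left),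
      b₂ S (subset_union_right.trans subset_union_left), ← sum_sub_distrib, ← sum_sub_distrib]
    simp only [← sub_smul]
    apply schurPositive_of_sum _ _ hS
    intro d _
    have h1 : lrCount (SDiagG (colD m) (shapeCells κ ρ h) 1) d =
        ∑ α ∈ A, c α * if Vrel m (stairF α) d then 1 else 0 := by
      rw [lrCount_col hs hm]
      exact hcount fun ν => Vrel m ν d
    have h2 : lrCount (SDiagG (rowD m) (shapeCells κ ρ h) 1) d ≤
        ∑ α ∈ A, c α * if Hrel m (stairF α) d then 1 else 0 :=
      (lrCount_row_le hs hm hm' d).trans (hcount fun ν => Hrel m ν d).le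
    rw [h1]
    simp only [mul_sub, sum_sub_distrib]
    push_cast at h2 ⊢
    zify at h2
    linarith
  · apply schurPositive_of_sum _ _ hS
    intro d _
    apply sum_nonneg
    intro α hα
    apply mul_nonneg (Nat.cast_nonneg _)
    have := hVH α hα d
    split_ifs <;> simp_all

end Assembly

/-- if `D = ρ/κ` is a sum of fat staircases and `λ = (m)` a single
row with `m − 1` at most the length of the last row of `D`, then
`s_{S(λ^t,D;1)} − s_{S(λ,D;1)} ≥_s Σ_ν c^ρ_{κν} (s_{S(λ^t,α(ν)^◁;1)} − s_{S(λ,α(ν)^◁;1)}) ≥_s 0`. -/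
theorem col_minus_row_sum_schurPositive (ρ κ : YoungDiagram) (hsub : κ ≤ ρ)
    (hfat : IsSumOfFatStaircases (ρ.cells \ κ.cells))
    (m : ℕ) (hm : 1 ≤ m) (hlen : m - 1 ≤ lastRowLen (ρ.cells \ κ.cells)) :
    SchurPositive
      ((schurOf (SDiagG (colD m) (ρ.cells \ κ.cells) 1) -
        schurOf (SDiagG (rowD m) (ρ.cells \ κ.cells) 1)) -
       (∑ᶠ α : List ℕ,
          if ∀ a ∈ α, 0 < a then
            (lrCoeff ρ κ (rowContent (fatStaircase α))) •
              (schurOf (SDiagG (colD m) (rotD (fatStaircase α)) 1) -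
               schurOf (SDiagG (rowD m) (rotD (fatStaircase α)) 1))
          else 0)) ∧
    SchurPositive
      (∑ᶠ α : List ℕ,
        if ∀ a ∈ α, 0 < a then
          (lrCoeff ρ κ (rowContent (fatStaircase α))) •
            (schurOf (SDiagG (colD m) (rotD (fatStaircase α)) 1) -
             schurOf (SDiagG (rowD m) (rotD (fatStaircase α)) 1))
        else 0) := by
  rcases eq_or_ne (ρ.cells \ κ.cells) ∅ with he | hne
  · -- an empty diagram forces `m = 1`, where the column and the row coincide
    rw [he] at hlen ⊢
    have : m = 1 := by
      have h0 : lastRowLen ∅ = 0 := rfl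
      omega
    subst this
    simp only [colD_one, sub_self, smul_zero, ite_self, finsum_zero]
    exact ⟨schurPositive_zero, schurPositive_zero⟩
  · obtain ⟨κ', ρ', h, hs, hD⟩ := skew_isNE ρ κ hsub (nonempty_iff_ne_empty.2 hne)
    simp only [lrCoeff]
    rw [hD] at hfat hlen ⊢
    rw [hs.lastRowLen] at hlen
    obtain ⟨A, hA, h1, h2⟩ := main_aux (m := m) hs hfat hm (by omega)
    have hfs : (∑ᶠ α : List ℕ,
        if ∀ a ∈ α, 0 < a then
          (lrCount (shapeCells κ' ρ' h) (rowContent (fatStaircase α))) •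
            (schurOf (SDiagG (colD m) (rotD (fatStaircase α)) 1) -
             schurOf (SDiagG (rowD m) (rotD (fatStaircase α)) 1))
        else 0) = ∑ α ∈ A, lrCount (shapeCells κ' ρ' h) (rowContent (fatStaircase α)) •
          (schurOf (SDiagG (colD m) (rotD (fatStaircase α)) 1) -
            schurOf (SDiagG (rowD m) (rotD (fatStaircase α)) 1)) := by
      rw [finsum_eq_sum_of_support_subset (s := A)]
      · apply sum_congr rfl
        intro α hα
        rw [if_pos ((hA α).1 hα).1]
      · intro α hα
        rw [Function.mem_support] at hα
        by_cases hpos : ∀ a ∈ α, 0 < a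
        · rw [if_pos hpos] at hα
          refine mem_coe.2 ((hA α).2 ⟨hpos, fun h0 => hα ?_⟩)
          rw [h0, zero_smul]
        · rw [if_neg hpos] at hα
          exact absurd rfl hα
    rw [hfs]
    exact ⟨h1, h2⟩
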